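/- Perturbation criterion for a degenerately positive functional: Suppose Q_V(u) ≥ 0 for every u ∈ C_c^∞(Ω) and Q_V admits a ground state v in Ω. Let V₀ : Ω → ℝ be a bounded measurable function whose support has compact closure contained in Ω. Then there exists t > 0 such that Q_{V + t V₀} is strictly positive in Ω (i.e., there is a continuous function W : Ω → ℝ with W > 0 everywhere such that Q_{V + t V₀}(u) ≥ ∫_Ω W|u|^p dx for all u ∈ C_c^∞(Ω)) if and only if ∫_Ω V₀ v^p dx > 0. -/

import Mathlib

open MeasureTheory Filter
open scoped RealInnerProductSpace Topology

noncomputable section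

/-- Euclidean space `ℝ^d`. -/
abbrev Euc (d : ℕ) := EuclideanSpace ℝ (Fin d)

/-- A test function on `Ω`: smooth with compact support contained in `Ω`. -/
def IsTestFun {d : ℕ} (Ω : Set (Euc d)) (u : Euc d → ℝ) : Prop :=
  ContDiff ℝ (⊤ : ℕ∞) u ∧ HasCompactSupport u ∧ tsupport u ⊆ Ω

/-- The energy functional `Q(u) = ∫_Ω (|∇u|^p + V |u|^p) dx`. -/
def energyQ {d : ℕ} (Ω : Set (Euc d)) (V : Euc d → ℝ) (p : ℝ) (u : Euc d → ℝ) : ℝ :=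
  ∫ x in Ω, (‖gradient u x‖ ^ p + V x * |u x| ^ p)

/-- `V` is measurable and bounded on every compact subset of `Ω`. -/
def LocBddPotential {d : ℕ} (Ω : Set (Euc d)) (V : Euc d → ℝ) : Prop :=
  Measurable V ∧ ∀ K : Set (Euc d), K ⊆ Ω → IsCompact K → ∃ C : ℝ, ∀ x ∈ K, |V x| ≤ C

/-- A positive supersolution of `Q'(u) = 0` in `Ω`. -/
def IsPositiveSupersolution {d : ℕ} (Ω : Set (Euc d)) (V : Euc d → ℝ) (p : ℝ)
    (v : Euc d → ℝ) : Prop :=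
  ContDiffOn ℝ 1 v Ω ∧ (∀ x ∈ Ω, 0 < v x) ∧
    ∀ φ : Euc d → ℝ, IsTestFun Ω φ → (∀ x, 0 ≤ φ x) →
      0 ≤ ∫ x in Ω, (‖gradient v x‖ ^ (p - 2) * ⟪gradient v x, gradient φ x⟫
            + V x * v x ^ (p - 1) * φ x)

/-- A positive (weak) solution of `Q'(u) = 0` in `Ω`. -/
def IsPositiveSolution {d : ℕ} (Ω : Set (Euc d)) (V : Euc d → ℝ) (p : ℝ)
    (v : Euc d → ℝ) : Prop :=
  ContDiffOn ℝ 1 v Ω ∧ (∀ x ∈ Ω, 0 < v x) ∧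
    ∀ φ : Euc d → ℝ, IsTestFun Ω φ →
      (∫ x in Ω, (‖gradient v x‖ ^ (p - 2) * ⟪gradient v x, gradient φ x⟫
            + V x * v x ^ (p - 1) * φ x)) = 0

/-- A null sequence for the functional `Q`. -/
def IsNullSequence {d : ℕ} (Ω : Set (Euc d)) (V : Euc d → ℝ) (p : ℝ)
    (u : ℕ → Euc d → ℝ) : Prop :=
  (∀ k, IsTestFun Ω (u k)) ∧ (∀ k x, 0 ≤ u k x) ∧
    ∃ B : Set (Euc d), IsOpen B ∧ IsCompact (closure B) ∧ closure B ⊆ Ω ∧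
      (∀ k, (∫ x in B, u k x ^ p) = 1) ∧
      Tendsto (fun k => energyQ Ω V p (u k)) atTop (𝓝 0)

/-- A ground state of `Q`: a positive `C¹` function on `Ω` which is the limit in
`L^p_loc(Ω)` of a null sequence. -/
def IsGroundState {d : ℕ} (Ω : Set (Euc d)) (V : Euc d → ℝ) (p : ℝ)
    (v : Euc d → ℝ) : Prop :=
  ContDiffOn ℝ 1 v Ω ∧ (∀ x ∈ Ω, 0 < v x) ∧
    ∃ u : ℕ → Euc d → ℝ, IsNullSequence Ω V p u ∧
      ∀ K : Set (Euc d), K ⊆ Ω → IsCompact K →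
        Tendsto (fun k => ∫ x in K, |u k x - v x| ^ p) atTop (𝓝 0)

/-- `Q` has a weighted spectral gap (is strictly positive) in `Ω`. -/
def HasSpectralGap {d : ℕ} (Ω : Set (Euc d)) (V : Euc d → ℝ) (p : ℝ) : Prop :=
  ∃ W : Euc d → ℝ, ContinuousOn W Ω ∧ (∀ x ∈ Ω, 0 < W x) ∧
    ∀ u : Euc d → ℝ, IsTestFun Ω u → (∫ x in Ω, W x * |u x| ^ p) ≤ energyQ Ω V p u

/-- `c_B`: the infimum of `Q(u)` over test functions with `∫_B |u|^p = 1`. -/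
def cB {d : ℕ} (Ω B : Set (Euc d)) (V : Euc d → ℝ) (p : ℝ) : ℝ :=
  sInf { q : ℝ | ∃ u : Euc d → ℝ, IsTestFun Ω u ∧ (∫ x in B, |u x| ^ p) = 1 ∧
    q = energyQ Ω V p u }

/-- The Picone Lagrangian `L(u,v)`. -/
def piconeL {d : ℕ} (p : ℝ) (u v : Euc d → ℝ) (x : Euc d) : ℝ :=
  ‖gradient u x‖ ^ p + (p - 1) * (u x / v x) ^ p * ‖gradient v x‖ ^ p
    - p * (u x / v x) ^ (p - 1) *
        (‖gradient v x‖ ^ (p - 2) * ⟪gradient u x, gradient v x⟫)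

/-!
A ground state `v` is a positive solution of `Q_V'(v) = 0`: minimality along a null sequence passes
to the limit thanks to the lower semicontinuity of the gradient term. By Picone's identity the
energy `Q_V(r v)` is then a Bregman remainder, which controls `∫_K |∇r|^p` up to an arbitrarily
small multiple of `∫_K |r|^p`. Together with the Poincaré inequality, propagated along chains of
overlapping balls, this attaches to every test function `w` an amplitude `c w` such that
`∫_K |w - (c w) v|^p` is bounded by `Q_V(w)`, up to an arbitrarily small multiple of `|c w|^p`.

Hence `Q_V(w) + t ∫ V₀ |w|^p` is at least of order `Q_V(w) + t |c w|^p ∫ V₀ v^p` for small `t`,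
which dominates `∫_K |w|^p` for every compact `K` as soon as `∫ V₀ v^p > 0`; the resulting bounds
are then summed over an exhaustion of `Ω` into a single weight. Conversely, a spectral gap evaluated
along a null sequence, where `Q_V` tends to `0`, leaves `t ∫ V₀ v^p > 0`.
-/

section NormPower

variable {p : ℝ}

lemma rpow_sub_two_mul_self (hp : 1 < p) {x : ℝ} (hx : 0 ≤ x) :
    x ^ (p - 2) * x = x ^ (p - 1) := by
  rcases hx.eq_or_lt with rfl | hx
  · simp [Real.zero_rpow (by linarith : p - 1 ≠ 0)]
  · rw [← Real.rpow_add_one hx.ne']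
    ring_nf

lemma rpow_sub_one_mul_self (hp : 1 < p) {x : ℝ} (hx : 0 ≤ x) : x ^ (p - 1) * x = x ^ p := by
  rcases hx.eq_or_lt with rfl | hx
  · simp [Real.zero_rpow (by linarith : p ≠ 0)]
  · rw [← Real.rpow_add_one hx.ne', sub_add_cancel]

lemma add_rpow_le_mul_rpow_add_rpow (hp : 1 ≤ p) {x y : ℝ} (hx : 0 ≤ x) (hy : 0 ≤ y) :
    (x + y) ^ p ≤ 2 ^ (p - 1) * (x ^ p + y ^ p) :=
  mod_cast NNReal.rpow_add_le_mul_rpow_add_rpow ⟨x, hx⟩ ⟨y, hy⟩ hp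

lemma exists_add_rpow_le (hp : 1 < p) {ε : ℝ} (hε : 0 < ε) :
    ∃ C ≥ 0, ∀ x y : ℝ, 0 ≤ x → 0 ≤ y → (x + y) ^ p ≤ (1 + ε) * x ^ p + C * y ^ p := by
  have hcont : ContinuousAt (fun θ : ℝ ↦ (1 - θ) ^ (1 - p)) 0 :=
    (continuousAt_const.sub continuousAt_id).rpow_const (Or.inl (by norm_num))
  have hlt : ∀ᶠ θ in 𝓝[>] (0 : ℝ), (1 - θ) ^ (1 - p) < 1 + ε :=
    (hcont.tendsto.mono_left nhdsWithin_le_nhds).eventually_lt_const (by simpa using hε)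
  obtain ⟨θ, hθε, hθ₀, hθ₁⟩ :=
    (hlt.and (Ioo_mem_nhdsGT (zero_lt_one' ℝ))).exists
  refine ⟨θ ^ (1 - p), by positivity, fun x y hx hy ↦ ?_⟩
  have hθ₁' : 0 < 1 - θ := by linarith
  have scale : ∀ s z : ℝ, 0 < s → 0 ≤ z → s * (z / s) ^ p = s ^ (1 - p) * z ^ p := by
    intro s z hs hz
    rw [Real.div_rpow hz hs.le, Real.rpow_sub hs, Real.rpow_one]
    ring
  have hconv := (convexOn_rpow hp.le).2 (div_nonneg hx hθ₁'.le) (div_nonneg hy hθ₀.le)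
    hθ₁'.le hθ₀.le (by ring)
  simp only [smul_eq_mul, mul_div_cancel₀ _ hθ₁'.ne', mul_div_cancel₀ _ hθ₀.ne',
    scale _ _ hθ₁' hx, scale _ _ hθ₀ hy] at hconv
  exact hconv.trans (by gcongr)

variable {H : Type*} [NormedAddCommGroup H]

/-- The convex conjugate `ξ ↦ sup_a (⟪ξ, a⟫ - ‖a‖^p)` of the function `‖·‖^p` on an inner product
space, in closed form. -/
def conjNormRpow (p : ℝ) (ξ : H) : ℝ := (p - 1) * (‖ξ‖ / p) ^ (p / (p - 1))

lemma continuous_conjNormRpow (hp : 1 < p) : Continuous (conjNormRpow p : H → ℝ) := by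
  have : 0 ≤ p / (p - 1) := div_nonneg (by linarith) (by linarith)
  unfold conjNormRpow
  fun_prop (disch := assumption)

lemma exists_abs_norm_rpow_sub_le (hp : 1 < p) {ε : ℝ} (hε : 0 < ε) :
    ∃ C ≥ 0, ∀ a b : H, |‖a‖ ^ p - ‖b‖ ^ p| ≤ ε * ‖b‖ ^ p + C * ‖a - b‖ ^ p := by
  obtain ⟨C, hC, hadd⟩ := exists_add_rpow_le hp hε
  have upper : ∀ a b : H, ‖a‖ ^ p ≤ (1 + ε) * ‖b‖ ^ p + C * ‖a - b‖ ^ p := fun a b ↦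
    calc ‖a‖ ^ p ≤ (‖b‖ + ‖a - b‖) ^ p := by
          gcongr
          simpa using norm_add_le b (a - b)
      _ ≤ _ := hadd _ _ (norm_nonneg _) (norm_nonneg _)
  refine ⟨C, hC, fun a b ↦ abs_le.2 ⟨?_, by linarith [upper a b]⟩⟩
  have hba := upper b a
  rw [norm_sub_rev] at hba
  rcases le_total (‖a‖ ^ p) (‖b‖ ^ p) with hab | hab
  · linarith [mul_le_mul_of_nonneg_left hab hε.le]
  · have : 0 ≤ ε * ‖b‖ ^ p + C * ‖a - b‖ ^ p := by positivity
    linarith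

variable [InnerProductSpace ℝ H]

/-- The gradient `p ‖b‖^{p-2} b` of the function `‖·‖^p` on an inner product space. -/
def gradNormRpow (p : ℝ) (b : H) : H := (p * ‖b‖ ^ (p - 2)) • b

/-- The Bregman divergence of `‖·‖^p`: the gap at `a` between `‖·‖^p` and its affine
approximation at `b`. -/
def bregman (p : ℝ) (a b : H) : ℝ := ‖a‖ ^ p - ‖b‖ ^ p - ⟪gradNormRpow p b, a - b⟫

lemma hasFDerivAt_norm_rpow_gradNormRpow (hp : 1 < p) (b : H) :
    HasFDerivAt (fun a : H ↦ ‖a‖ ^ p) (innerSL ℝ (gradNormRpow p b)) b := by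
  simpa [gradNormRpow] using hasFDerivAt_norm_rpow b hp

lemma continuous_gradNormRpow [CompleteSpace H] (hp : 1 < p) :
    Continuous (gradNormRpow p : H → H) := by
  have h : Continuous fun b : H ↦ gradient (fun a : H ↦ ‖a‖ ^ p) b :=
    (InnerProductSpace.toDual ℝ H).symm.continuous.comp
      ((contDiff_norm_rpow hp).continuous_fderiv one_ne_zero)
  refine h.congr fun b ↦ HasGradientAt.gradient ?_
  exact hasFDerivAt_norm_rpow_gradNormRpow hp b

lemma norm_gradNormRpow (hp : 1 < p) (b : H) : ‖gradNormRpow p b‖ = p * ‖b‖ ^ (p - 1) := by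
  rw [gradNormRpow, norm_smul, Real.norm_of_nonneg (by positivity), mul_assoc,
    rpow_sub_two_mul_self hp (norm_nonneg _)]

lemma inner_gradNormRpow_self (hp : 1 < p) (b : H) : ⟪gradNormRpow p b, b⟫ = p * ‖b‖ ^ p := by
  rw [gradNormRpow, real_inner_smul_left, real_inner_self_eq_norm_mul_norm, mul_assoc,
    ← mul_assoc (‖b‖ ^ (p - 2)), rpow_sub_two_mul_self hp (norm_nonneg _),
    rpow_sub_one_mul_self hp (norm_nonneg _)]

lemma gradNormRpow_smul (p c : ℝ) (b : H) :
    gradNormRpow p (c • b) = (|c| ^ (p - 2) * c) • gradNormRpow p b := by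
  simp only [gradNormRpow, norm_smul, Real.norm_eq_abs, smul_smul,
    Real.mul_rpow (abs_nonneg c) (norm_nonneg b)]
  ring_nf

lemma inner_le_norm_rpow_add_conjNormRpow (hp : 1 < p) (ξ a : H) :
    ⟪ξ, a⟫ ≤ ‖a‖ ^ p + conjNormRpow p ξ := by
  have hp₀ : 0 < p := by linarith
  have young := Real.young_inequality_of_nonneg (norm_nonneg a) (by positivity : 0 ≤ ‖ξ‖ / p)
    (Real.HolderConjugate.conjExponent hp)
  have conj_le : (‖ξ‖ / p) ^ p.conjExponent / p.conjExponent * p = conjNormRpow p ξ := by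
    rw [conjNormRpow, Real.conjExponent]
    field_simp
  calc ⟪ξ, a⟫ ≤ ‖ξ‖ * ‖a‖ := real_inner_le_norm _ _
    _ = ‖a‖ * (‖ξ‖ / p) * p := by field_simp
    _ ≤ (‖a‖ ^ p / p + (‖ξ‖ / p) ^ p.conjExponent / p.conjExponent) * p := by gcongr
    _ = ‖a‖ ^ p + conjNormRpow p ξ := by rw [add_mul, conj_le, div_mul_cancel₀ _ hp₀.ne']

lemma conjNormRpow_gradNormRpow (hp : 1 < p) (b : H) :
    conjNormRpow p (gradNormRpow p b) = (p - 1) * ‖b‖ ^ p := by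
  rw [conjNormRpow, norm_gradNormRpow hp, mul_div_cancel_left₀ _ (by linarith : p ≠ 0),
    ← Real.rpow_mul (norm_nonneg b), mul_div_cancel₀ _ (by linarith : p - 1 ≠ 0)]

lemma inner_gradNormRpow_self_sub_conjNormRpow (hp : 1 < p) (b : H) :
    ⟪gradNormRpow p b, b⟫ - conjNormRpow p (gradNormRpow p b) = ‖b‖ ^ p := by
  rw [inner_gradNormRpow_self hp, conjNormRpow_gradNormRpow hp]
  ring

lemma bregman_eq (hp : 1 < p) (a b : H) :
    bregman p a b = ‖a‖ ^ p + (p - 1) * ‖b‖ ^ p - ⟪gradNormRpow p b, a⟫ := by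
  rw [bregman, inner_sub_right, inner_gradNormRpow_self hp]
  ring

lemma bregman_nonneg (hp : 1 < p) (a b : H) : 0 ≤ bregman p a b := by
  have := inner_le_norm_rpow_add_conjNormRpow hp (gradNormRpow p b) a
  rw [conjNormRpow_gradNormRpow hp] at this
  rw [bregman_eq hp]
  linarith

lemma norm_half_smul_add_rpow_lt (hp : 1 < p) {a b : H} (hab : a ≠ b) :
    ‖(1 / 2 : ℝ) • (a + b)‖ ^ p < (‖a‖ ^ p + ‖b‖ ^ p) / 2 := by
  rcases eq_or_ne ‖a‖ ‖b‖ with heq | hne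
  · calc ‖(1 / 2 : ℝ) • (a + b)‖ ^ p < ‖a‖ ^ p :=
          Real.rpow_lt_rpow (norm_nonneg _) ((norm_midpoint_lt_iff heq).2 hab) (by linarith)
      _ = (‖a‖ ^ p + ‖b‖ ^ p) / 2 := by rw [heq]; ring
  · have hle : ‖(1 / 2 : ℝ) • (a + b)‖ ≤ 1 / 2 * ‖a‖ + 1 / 2 * ‖b‖ := by
      rw [norm_smul, ← mul_add, Real.norm_of_nonneg (by norm_num)]
      gcongr
      exact norm_add_le a b
    have hlt := (strictConvexOn_rpow hp).2 (norm_nonneg a) (norm_nonneg b) hne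
      (by norm_num : (0 : ℝ) < 1 / 2) (by norm_num : (0 : ℝ) < 1 / 2) (by norm_num)
    simp only [smul_eq_mul] at hlt
    calc ‖(1 / 2 : ℝ) • (a + b)‖ ^ p ≤ (1 / 2 * ‖a‖ + 1 / 2 * ‖b‖) ^ p := by gcongr
      _ < 1 / 2 * ‖a‖ ^ p + 1 / 2 * ‖b‖ ^ p := hlt
      _ = (‖a‖ ^ p + ‖b‖ ^ p) / 2 := by ring

lemma bregman_pos (hp : 1 < p) {a b : H} (hab : a ≠ b) : 0 < bregman p a b := by
  have hmid := bregman_nonneg hp ((1 / 2 : ℝ) • (a + b)) b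
  have hsub : (1 / 2 : ℝ) • (a + b) - b = (1 / 2 : ℝ) • (a - b) := by module
  rw [bregman, hsub, inner_smul_right] at hmid
  have := norm_half_smul_add_rpow_lt hp hab
  rw [bregman]
  linarith

lemma bregman_smul (hp : 1 < p) {c : ℝ} (hc : 0 ≤ c) (a b : H) :
    bregman p (c • a) (c • b) = c ^ p * bregman p a b := by
  have hcp : c ^ (p - 2) * c * c = c ^ p := by
    rw [rpow_sub_two_mul_self hp hc, rpow_sub_one_mul_self hp hc]
  rw [bregman, bregman, ← smul_sub, gradNormRpow_smul, real_inner_smul_left, inner_smul_right,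
    norm_smul, norm_smul, Real.norm_of_nonneg hc, Real.mul_rpow hc (norm_nonneg _),
    Real.mul_rpow hc (norm_nonneg _), abs_of_nonneg hc, ← hcp]
  ring

lemma continuous_bregman [CompleteSpace H] (hp : 1 < p) :
    Continuous fun z : H × H ↦ bregman p z.1 z.2 := by
  have hp₀ : 0 ≤ p := by linarith
  have := continuous_gradNormRpow (H := H) hp
  unfold bregman
  fun_prop (disch := assumption)

lemma exists_pos_le_bregman_of_norm_eq_one [FiniteDimensional ℝ H] (hp : 1 < p) {δ : ℝ}
    (hδ : 0 < δ) :
    ∃ m > 0, ∀ z : H × H, ‖z‖ = 1 → δ * ‖z.2‖ ^ p ≤ ‖z.1 - z.2‖ ^ p →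
      m ≤ bregman p z.1 z.2 := by
  have hp₀ : 0 < p := by linarith
  let T : Set (H × H) := Metric.sphere 0 1 ∩ {z | δ * ‖z.2‖ ^ p ≤ ‖z.1 - z.2‖ ^ p}
  have hT : IsCompact T := by
    refine (isCompact_sphere 0 1).inter_right (isClosed_le ?_ ?_) <;>
      fun_prop (disch := exact hp₀.le)
  have hTpos : ∀ z ∈ T, 0 < bregman p z.1 z.2 := by
    rintro ⟨a, b⟩ ⟨hz, hle⟩
    refine bregman_pos hp fun hab ↦ ?_
    obtain rfl : a = b := hab
    have ha : a ≠ 0 := by rintro rfl; simp at hz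
    have : 0 < δ * ‖a‖ ^ p := by positivity
    simp only [Set.mem_ofPred_eq, sub_self, norm_zero, Real.zero_rpow hp₀.ne'] at hle
    linarith
  obtain ⟨m, hm, hmT⟩ := hT.exists_forall_le' (continuous_bregman hp).continuousOn hTpos
  exact ⟨m, hm, fun z hz hle ↦ hmT z ⟨mem_sphere_zero_iff_norm.2 hz, hle⟩⟩

lemma exists_norm_sub_rpow_le_bregman_add [FiniteDimensional ℝ H] (hp : 1 < p) {δ : ℝ}
    (hδ : 0 < δ) :
    ∃ C > 0, ∀ a b : H, ‖a - b‖ ^ p ≤ C * bregman p a b + δ * ‖b‖ ^ p := by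
  have hp₀ : 0 < p := by linarith
  obtain ⟨m, hm, hm_le⟩ := exists_pos_le_bregman_of_norm_eq_one (H := H) hp hδ
  refine ⟨2 ^ p / m, by positivity, fun a b ↦ ?_⟩
  rcases le_total (‖a - b‖ ^ p) (δ * ‖b‖ ^ p) with hle | hle
  · have := bregman_nonneg hp a b
    exact hle.trans (le_add_of_nonneg_left (by positivity))
  rcases eq_or_ne (a, b) 0 with h0 | h0
  · obtain ⟨rfl, rfl⟩ := Prod.mk_eq_zero.1 h0
    simp [bregman, gradNormRpow, Real.zero_rpow hp₀.ne']
  set c := ‖(a, b)‖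
  have hc : 0 < c := norm_pos_iff.2 h0
  have hcp : m * c ^ p ≤ bregman p a b := by
    have hle' : δ * ‖c⁻¹ • b‖ ^ p ≤ ‖c⁻¹ • a - c⁻¹ • b‖ ^ p := by
      rw [← smul_sub, norm_smul, norm_smul, Real.mul_rpow (norm_nonneg _) (norm_nonneg _),
        Real.mul_rpow (norm_nonneg _) (norm_nonneg _), mul_left_comm]
      gcongr
    have := hm_le (c⁻¹ • (a, b)) (norm_smul_inv_norm (𝕜 := ℝ) h0) hle'
    rwa [Prod.smul_fst, Prod.smul_snd, bregman_smul hp (inv_nonneg.2 hc.le), Real.inv_rpow hc.le,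
      ← div_eq_inv_mul, le_div_iff₀ (by positivity)] at this
  have hnorm : ‖a - b‖ ≤ 2 * c := by
    linarith [norm_sub_le a b, norm_fst_le (a, b), norm_snd_le (a, b)]
  calc ‖a - b‖ ^ p ≤ (2 * c) ^ p := by gcongr
    _ = 2 ^ p / m * (m * c ^ p) := by
      rw [Real.mul_rpow zero_le_two hc.le]
      field_simp
    _ ≤ 2 ^ p / m * bregman p a b := by gcongr
    _ ≤ _ := le_add_of_nonneg_right (by positivity)

end NormPower

section CompactIntegrals

lemma integrableOn_bdd_mul {α : Type*} [MeasurableSpace α] {μ : Measure α} {s : Set α}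
    (hs : MeasurableSet s) {m h : α → ℝ} {D : ℝ} (hm : AEStronglyMeasurable m (μ.restrict s))
    (hmD : ∀ x ∈ s, |m x| ≤ D) (hh : IntegrableOn h s μ) :
    IntegrableOn (fun x ↦ m x * h x) s μ :=
  Integrable.bdd_mul (c := D) hh hm ((ae_restrict_iff' hs).2 (ae_of_all μ hmD))

lemma integral_norm_add_rpow_le {α E : Type*} [MeasurableSpace α] {μ : Measure α}
    [SeminormedAddCommGroup E] {p : ℝ} (hp : 1 ≤ p) {f g : α → E}
    (hf : Integrable (fun x ↦ ‖f x‖ ^ p) μ) (hg : Integrable (fun x ↦ ‖g x‖ ^ p) μ) :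
    ∫ x, ‖f x + g x‖ ^ p ∂μ ≤ 2 ^ (p - 1) * (∫ x, ‖f x‖ ^ p ∂μ + ∫ x, ‖g x‖ ^ p ∂μ) := by
  have hp0 : 0 ≤ p := zero_le_one.trans hp
  rw [← integral_add hf hg, ← integral_const_mul]
  refine integral_mono_of_nonneg (ae_of_all _ fun x ↦ by positivity) ((hf.add hg).const_mul _)
    (ae_of_all _ fun x ↦ ?_)
  exact (Real.rpow_le_rpow (norm_nonneg _) (norm_add_le _ _) hp0).trans
    (add_rpow_le_mul_rpow_add_rpow hp (norm_nonneg _) (norm_nonneg _))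

lemma setIntegral_norm_rpow_le_of_norm_sub {α E : Type*} [MeasurableSpace α] {μ : Measure α}
    [SeminormedAddCommGroup E] {p : ℝ} (hp : 1 ≤ p) {s : Set α} (hs : μ s ≠ ⊤) {f : α → E} {c : E}
    (hfc : IntegrableOn (fun x ↦ ‖f x - c‖ ^ p) s μ) :
    ∫ x in s, ‖f x‖ ^ p ∂μ ≤
      2 ^ (p - 1) * (∫ x in s, ‖f x - c‖ ^ p ∂μ + ‖c‖ ^ p * μ.real s) := by
  have h := integral_norm_add_rpow_le hp hfc (integrableOn_const (C := ‖c‖ ^ p) hs)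
  simpa only [sub_add_cancel, setIntegral_const, smul_eq_mul, mul_comm (μ.real s)] using h

lemma norm_rpow_mul_measureReal_le {α E : Type*} [MeasurableSpace α] {μ : Measure α}
    [SeminormedAddCommGroup E] {p : ℝ} (hp : 1 ≤ p) {s : Set α} {f : α → E} {c : E}
    (hf : IntegrableOn (fun x ↦ ‖f x‖ ^ p) s μ)
    (hfc : IntegrableOn (fun x ↦ ‖f x - c‖ ^ p) s μ) :
    ‖c‖ ^ p * μ.real s ≤
      2 ^ (p - 1) * (∫ x in s, ‖f x - c‖ ^ p ∂μ + ∫ x in s, ‖f x‖ ^ p ∂μ) := by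
  have hcf : IntegrableOn (fun x ↦ ‖c - f x‖ ^ p) s μ := by simpa only [norm_sub_rev] using hfc
  have h := integral_norm_add_rpow_le hp hcf hf
  simpa only [sub_add_cancel, setIntegral_const, smul_eq_mul, mul_comm (μ.real s),
    norm_sub_rev c] using h

variable {X E : Type*} [TopologicalSpace X] [MeasurableSpace X] [T2Space X] [BorelSpace X]
  [NormedAddCommGroup E] {μ : Measure X} [IsFiniteMeasureOnCompacts μ] {K : Set X} {p D : ℝ}
  {m : X → ℝ}

lemma integrableOn_norm_rpow (hp : 0 ≤ p) (hK : IsCompact K) {f : X → E}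
    (hf : ContinuousOn f K) : IntegrableOn (fun x ↦ ‖f x‖ ^ p) K μ :=
  (hf.norm.rpow_const fun _ _ ↦ Or.inr hp).integrableOn_compact hK

lemma ofReal_setIntegral_norm_rpow (hp : 0 ≤ p) (hK : IsCompact K) {f : X → E}
    (hf : ContinuousOn f K) :
    ENNReal.ofReal (∫ x in K, ‖f x‖ ^ p ∂μ) = ∫⁻ x in K, ‖f x‖ₑ ^ p ∂μ := by
  rw [ofReal_integral_eq_lintegral_ofReal (integrableOn_norm_rpow hp hK hf)
    (ae_of_all _ fun x ↦ by positivity)]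
  simp only [← ENNReal.ofReal_rpow_of_nonneg (norm_nonneg _) hp, ofReal_norm]

lemma abs_setIntegral_mul_norm_rpow_sub_le (hp : 0 ≤ p) (hK : IsCompact K)
    (hm : AEStronglyMeasurable m (μ.restrict K)) (hmD : ∀ x ∈ K, |m x| ≤ D) {f g : X → E}
    (hf : ContinuousOn f K) (hg : ContinuousOn g K) {ε C : ℝ}
    (hC : ∀ a b : E, |‖a‖ ^ p - ‖b‖ ^ p| ≤ ε * ‖b‖ ^ p + C * ‖a - b‖ ^ p) :
    |∫ x in K, m x * ‖f x‖ ^ p ∂μ - ∫ x in K, m x * ‖g x‖ ^ p ∂μ| ≤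
      D * (ε * ∫ x in K, ‖g x‖ ^ p ∂μ + C * ∫ x in K, ‖f x - g x‖ ^ p ∂μ) := by
  have hfp := integrableOn_norm_rpow (μ := μ) hp hK hf
  have hgp := integrableOn_norm_rpow (μ := μ) hp hK hg
  have hfgp : IntegrableOn (fun x ↦ ‖f x - g x‖ ^ p) K μ :=
    integrableOn_norm_rpow hp hK (hf.sub hg)
  rw [← integral_sub (integrableOn_bdd_mul hK.measurableSet hm hmD hfp)
    (integrableOn_bdd_mul hK.measurableSet hm hmD hgp), ← integral_const_mul, ← integral_const_mul,
    ← integral_add (hgp.const_mul ε) (hfgp.const_mul C), ← integral_const_mul, ← Real.norm_eq_abs]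
  refine norm_integral_le_of_norm_le (((hgp.const_mul ε).add (hfgp.const_mul C)).const_mul D) ?_
  filter_upwards [ae_restrict_mem hK.measurableSet] with x hx
  rw [← mul_sub, norm_mul]
  exact mul_le_mul (hmD x hx) (hC _ _) (norm_nonneg _) ((abs_nonneg _).trans (hmD x hx))

lemma tendsto_setIntegral_mul_norm_rpow {ι : Type*} {l : Filter ι} (hp : 1 < p) (hK : IsCompact K)
    (hm : AEStronglyMeasurable m (μ.restrict K)) (hmD : ∀ x ∈ K, |m x| ≤ D) {f : ι → X → E}
    {g : X → E} (hf : ∀ i, ContinuousOn (f i) K) (hg : ContinuousOn g K)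
    (hfg : Tendsto (fun i ↦ ∫ x in K, ‖f i x - g x‖ ^ p ∂μ) l (𝓝 0)) :
    Tendsto (fun i ↦ ∫ x in K, m x * ‖f i x‖ ^ p ∂μ) l (𝓝 (∫ x in K, m x * ‖g x‖ ^ p ∂μ)) := by
  set G := ∫ x in K, ‖g x‖ ^ p ∂μ
  have : 0 ≤ G := integral_nonneg fun x ↦ by positivity
  refine tendsto_iff_norm_sub_tendsto_zero.2 (tendsto_order.2 ⟨fun a ha ↦ ?_, fun a ha ↦ ?_⟩)
  · exact .of_forall fun i ↦ ha.trans_le (norm_nonneg _)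
  obtain ⟨C, -, hC⟩ :=
    exists_abs_norm_rpow_sub_le (H := E) hp (by positivity : 0 < a / (|D| * G + 1))
  have hlim := ((hfg.const_mul C).const_add (a / (|D| * G + 1) * G)).const_mul |D|
  have hlt : |D| * (a / (|D| * G + 1) * G + C * 0) < a := by
    rw [mul_zero, add_zero, mul_left_comm, div_mul_eq_mul_div, div_lt_iff₀ (by positivity)]
    linarith
  filter_upwards [hlim.eventually_lt_const hlt] with i hi
  refine lt_of_le_of_lt ?_ hi
  exact abs_setIntegral_mul_norm_rpow_sub_le (by linarith) hK hm
    (fun x hx ↦ (hmD x hx).trans (le_abs_self D)) (hf i) hg hC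

lemma tendsto_setIntegral_norm_rpow_of_norm_le {F ι : Type*} [NormedAddCommGroup F] {l : Filter ι}
    (hp : 0 ≤ p) (hK : IsCompact K) {f : ι → X → E} {g : ι → X → F} {M : ℝ} (hM : 0 ≤ M)
    (hgf : ∀ i, ∀ x ∈ K, ‖g i x‖ ≤ M * ‖f i x‖) (hf : ∀ i, ContinuousOn (f i) K)
    (hlim : Tendsto (fun i ↦ ∫ x in K, ‖f i x‖ ^ p ∂μ) l (𝓝 0)) :
    Tendsto (fun i ↦ ∫ x in K, ‖g i x‖ ^ p ∂μ) l (𝓝 0) := by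
  refine squeeze_zero (fun i ↦ integral_nonneg fun x ↦ by positivity) (fun i ↦ ?_)
    (by simpa using hlim.const_mul (M ^ p))
  rw [← integral_const_mul]
  refine integral_mono_of_nonneg (ae_of_all _ fun x ↦ by positivity)
    ((integrableOn_norm_rpow hp hK (hf i)).const_mul _) ?_
  filter_upwards [ae_restrict_mem hK.measurableSet] with x hx
  rw [← Real.mul_rpow hM (norm_nonneg _)]
  exact Real.rpow_le_rpow (norm_nonneg _) (hgf i x hx) hp

end CompactIntegrals

section Gradient

variable {F : Type*} [NormedAddCommGroup F] [InnerProductSpace ℝ F] [CompleteSpace F] {f g : F → ℝ}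
  {x : F}

lemma gradient_fun_add (hf : DifferentiableAt ℝ f x) (hg : DifferentiableAt ℝ g x) :
    gradient (fun y ↦ f y + g y) x = gradient f x + gradient g x := by
  rw [gradient, fderiv_fun_add hf hg, map_add]
  rfl

lemma gradient_fun_sub (hf : DifferentiableAt ℝ f x) (hg : DifferentiableAt ℝ g x) :
    gradient (fun y ↦ f y - g y) x = gradient f x - gradient g x := by
  rw [gradient, fderiv_fun_sub hf hg, map_sub]
  rfl

lemma gradient_fun_mul (hf : DifferentiableAt ℝ f x) (hg : DifferentiableAt ℝ g x) :
    gradient (fun y ↦ f y * g y) x = f x • gradient g x + g x • gradient f x := by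
  rw [gradient, fderiv_fun_mul hf hg, map_add]
  simp [gradient]

lemma gradient_fun_comp {φ : ℝ → ℝ} {φ' : ℝ} (hφ : HasDerivAt φ φ' (f x))
    (hf : DifferentiableAt ℝ f x) : gradient (fun y ↦ φ (f y)) x = φ' • gradient f x := by
  rw [gradient, show (fun y ↦ φ (f y)) = φ ∘ f from rfl,
    (hφ.comp_hasFDerivAt x hf.hasFDerivAt).fderiv]
  simp [gradient]

lemma norm_gradient (f : F → ℝ) (x : F) : ‖gradient f x‖ = ‖fderiv ℝ f x‖ := by
  simp [gradient]

lemma continuous_gradient_of_contDiff (hf : ContDiff ℝ 1 f) : Continuous (gradient f) :=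
  (InnerProductSpace.toDual ℝ F).symm.continuous.comp (hf.continuous_fderiv one_ne_zero)

lemma gradient_eq_zero_of_notMem_tsupport (hx : x ∉ tsupport f) : gradient f x = 0 := by
  have : f =ᶠ[𝓝 x] fun _ ↦ 0 := notMem_tsupport_iff_eventuallyEq.1 hx
  rw [this.gradient_eq, gradient_fun_const]

lemma hasCompactSupport_gradient (hf : HasCompactSupport f) : HasCompactSupport (gradient f) :=
  hf.mono' fun x hx ↦ by
    contrapose! hx
    simp [gradient_eq_zero_of_notMem_tsupport hx]

end Gradient

section C1TestFunctions

/-- `C¹` functions with compact support contained in `Ω`. Cutoffs and quotients of test functions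
by a ground state are only `C¹`, so this is the class of competitors on which one works. -/
structure IsC1TestFun {E : Type*} [NormedAddCommGroup E] [NormedSpace ℝ E] (Ω : Set E)
    (f : E → ℝ) : Prop where
  contDiff : ContDiff ℝ 1 f
  hasCompactSupport : HasCompactSupport f
  tsupport_subset : tsupport f ⊆ Ω

lemma IsTestFun.isC1TestFun {d : ℕ} {Ω : Set (Euc d)} {f : Euc d → ℝ} (h : IsTestFun Ω f) :
    IsC1TestFun Ω f :=
  ⟨h.1.of_le (mod_cast le_top), h.2.1, h.2.2⟩

namespace IsC1TestFun

variable {E : Type*} [NormedAddCommGroup E] [NormedSpace ℝ E] {Ω : Set E} {f g : E → ℝ}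

lemma continuous (hf : IsC1TestFun Ω f) : Continuous f := hf.contDiff.continuous

lemma differentiableAt (hf : IsC1TestFun Ω f) (x : E) : DifferentiableAt ℝ f x :=
  hf.contDiff.differentiable one_ne_zero x

lemma of_support_subset {K : Set E} (hK : IsCompact K) (hKΩ : K ⊆ Ω) (hf : ContDiff ℝ 1 f)
    (hfK : Function.support f ⊆ K) : IsC1TestFun Ω f :=
  ⟨hf, HasCompactSupport.of_support_subset_isCompact hK hfK,
    (closure_minimal hfK hK.isClosed).trans hKΩ⟩

lemma add (hf : IsC1TestFun Ω f) (hg : IsC1TestFun Ω g) : IsC1TestFun Ω (fun x ↦ f x + g x) :=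
  of_support_subset (hf.hasCompactSupport.union hg.hasCompactSupport)
    (Set.union_subset hf.tsupport_subset hg.tsupport_subset) (hf.contDiff.add hg.contDiff)
    ((Function.support_add f g).trans
      (Set.union_subset_union (subset_tsupport f) (subset_tsupport g)))

lemma mul_contDiffOn (hΩ : IsOpen Ω) (hf : IsC1TestFun Ω f) (hg : ContDiffOn ℝ 1 g Ω) :
    IsC1TestFun Ω (fun x ↦ f x * g x) := by
  refine ⟨contDiff_iff_contDiffAt.2 fun x ↦ ?_, hf.hasCompactSupport.mul_right,
    tsupport_mul_subset_left.trans hf.tsupport_subset⟩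
  by_cases hx : x ∈ tsupport f
  · exact hf.contDiff.contDiffAt.mul (hg.contDiffAt (hΩ.mem_nhds (hf.tsupport_subset hx)))
  · exact (contDiffAt_const (c := (0 : ℝ))).congr_of_eventuallyEq
      ((notMem_tsupport_iff_eventuallyEq.1 hx).mono fun y hy ↦ by simp [hy])

lemma exists_eventuallyEq_one [FiniteDimensional ℝ E] (hΩ : IsOpen Ω) {K : Set E}
    (hK : IsCompact K) (hKΩ : K ⊆ Ω) :
    ∃ χ : E → ℝ, IsC1TestFun Ω χ ∧ (∀ x, χ x ∈ Set.Icc 0 1) ∧ ∀ x ∈ K, χ =ᶠ[𝓝 x] fun _ ↦ 1 := by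
  obtain ⟨L, hL, hKL, hLΩ⟩ := exists_compact_between hK hΩ hKΩ
  obtain ⟨χ, hχ₁, hχ₀, hχ⟩ := exists_contMDiffMap_one_nhds_of_subset_interior
    (modelWithCornersSelf ℝ E) (n := 1) hK.isClosed hKL
  refine ⟨χ, of_support_subset hL hLΩ χ.contMDiff.contDiff fun x hx ↦ ?_, hχ, fun x hx ↦ ?_⟩
  · exact by_contra fun hxL ↦ hx (hχ₀ x hxL)
  · exact hχ₁.filter_mono (nhds_le_nhdsSet hx)

end IsC1TestFun

end C1TestFunctions

section Energy

variable {d : ℕ} {Ω K : Set (Euc d)} {V f h : Euc d → ℝ} {p : ℝ}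

lemma LocBddPotential.integrable_mul (hV : LocBddPotential Ω V) (hh : Continuous h)
    (hhs : HasCompactSupport h) (hhΩ : tsupport h ⊆ Ω) : Integrable fun x ↦ V x * h x := by
  obtain ⟨C, hC⟩ := hV.2 _ hhΩ hhs
  rw [← integrableOn_iff_integrable_of_support_subset (s := tsupport h)]
  · exact integrableOn_bdd_mul (isClosed_tsupport h).measurableSet hV.1.aestronglyMeasurable hC
      (hh.integrable_of_hasCompactSupport hhs).integrableOn
  · exact (Function.support_mul_subset_right V h).trans (subset_tsupport h)

namespace IsC1TestFun

lemma continuous_gradient (hf : IsC1TestFun Ω f) : Continuous (gradient f) :=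
  continuous_gradient_of_contDiff hf.contDiff

lemma integrable_norm_gradient_rpow (hf : IsC1TestFun Ω f) (hp : 0 < p) :
    Integrable fun x ↦ ‖gradient f x‖ ^ p :=
  (hf.continuous_gradient.norm.rpow_const fun _ ↦ Or.inr hp.le).integrable_of_hasCompactSupport
    ((hasCompactSupport_gradient hf.hasCompactSupport).comp_left (g := fun a ↦ ‖a‖ ^ p)
      (by simp [hp.ne']))

lemma integrable_potential_mul_rpow (hf : IsC1TestFun Ω f) (hp : 0 < p)
    (hV : LocBddPotential Ω V) : Integrable fun x ↦ V x * |f x| ^ p :=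
  hV.integrable_mul (hf.continuous.abs.rpow_const fun _ ↦ Or.inr hp.le)
    (hf.hasCompactSupport.comp_left (g := fun a ↦ |a| ^ p) (by simp [hp.ne']))
    ((tsupport_comp_subset (g := fun a : ℝ ↦ |a| ^ p) (by simp [hp.ne']) f).trans
      hf.tsupport_subset)

lemma energyQ_eq (hf : IsC1TestFun Ω f) (hp : 0 < p) (hV : LocBddPotential Ω V) :
    energyQ Ω V p f = (∫ x, ‖gradient f x‖ ^ p) + ∫ x, V x * |f x| ^ p := by
  rw [← integral_add (hf.integrable_norm_gradient_rpow hp) (hf.integrable_potential_mul_rpow hp hV)]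
  refine setIntegral_eq_integral_of_forall_compl_eq_zero fun x hx ↦ ?_
  have hx : x ∉ tsupport f := fun h ↦ hx (hf.tsupport_subset h)
  simp [gradient_eq_zero_of_notMem_tsupport hx, image_eq_zero_of_notMem_tsupport hx, hp.ne']

lemma energyQ_eq_setIntegral (hf : IsC1TestFun Ω f) (hp : 0 < p) (hV : LocBddPotential Ω V)
    (hfK : tsupport f ⊆ K) :
    energyQ Ω V p f = (∫ x in K, ‖gradient f x‖ ^ p) + ∫ x in K, V x * |f x| ^ p := by
  rw [hf.energyQ_eq hp hV, setIntegral_eq_integral_of_forall_compl_eq_zero fun x hx ↦ ?_,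
    setIntegral_eq_integral_of_forall_compl_eq_zero fun x hx ↦ ?_]
  · simp [image_eq_zero_of_notMem_tsupport fun h ↦ hx (hfK h), hp.ne']
  · simp [gradient_eq_zero_of_notMem_tsupport fun h ↦ hx (hfK h), hp.ne']

end IsC1TestFun

end Energy

section Mollification

open scoped Convolution

variable {E F : Type*} [NormedAddCommGroup E] [NormedSpace ℝ E] [FiniteDimensional ℝ E]
  [MeasurableSpace E] [BorelSpace E] {μ : Measure E} [μ.IsAddHaarMeasure]
  [NormedAddCommGroup F] [NormedSpace ℝ F]

lemma tsupport_normed_convolution_subset (φ : ContDiffBump (0 : E)) (f : E → F) :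
    tsupport (φ.normed μ ⋆[ContinuousLinearMap.lsmul ℝ ℝ, μ] f) ⊆
      Metric.cthickening φ.rOut (tsupport f) := by
  refine closure_minimal (fun x hx ↦ ?_) Metric.isClosed_cthickening
  obtain ⟨a, ha, b, hb, rfl⟩ := support_convolution_subset _ hx
  rw [φ.support_normed_eq, mem_ball_zero_iff] at ha
  exact Metric.mem_cthickening_of_dist_le _ b _ _ (subset_tsupport f hb) (by simpa using ha.le)

lemma exists_norm_normed_convolution_sub_le [CompleteSpace F] {f : E → F} (hf : Continuous f)
    (hfc : HasCompactSupport f) {ε : ℝ} (hε : 0 < ε) :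
    ∃ r > 0, ∀ φ : ContDiffBump (0 : E), φ.rOut ≤ r →
      ∀ x, ‖(φ.normed μ ⋆[ContinuousLinearMap.lsmul ℝ ℝ, μ] f) x - f x‖ ≤ ε := by
  obtain ⟨r, hr, hfr⟩ :=
    Metric.uniformContinuous_iff.1 (hfc.uniformContinuous_of_continuous hf) ε hε
  refine ⟨r, hr, fun φ hφ x ↦ ?_⟩
  rw [← dist_eq_norm]
  exact φ.dist_normed_convolution_le hf.aestronglyMeasurable fun y hy ↦
    (hfr ((Metric.mem_ball.1 hy).trans_le hφ)).le

lemma fderiv_normed_convolution [CompleteSpace F] {f : E → F}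
    (hf : ContDiff ℝ 1 f) (hfc : HasCompactSupport f) (φ : ContDiffBump (0 : E)) (x : E) :
    fderiv ℝ (φ.normed μ ⋆[ContinuousLinearMap.lsmul ℝ ℝ, μ] f) x =
      (φ.normed μ ⋆[ContinuousLinearMap.lsmul ℝ ℝ, μ] fderiv ℝ f) x := by
  have hprec : (ContinuousLinearMap.lsmul ℝ ℝ (E := F)).precompR E =
      ContinuousLinearMap.lsmul ℝ ℝ := by
    ext
    simp
  rw [(hfc.hasFDerivAt_convolution_right (ContinuousLinearMap.lsmul ℝ ℝ)
    φ.continuous_normed.locallyIntegrable hf x).fderiv, hprec]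

variable {d : ℕ} {Ω : Set (Euc d)} {f : Euc d → ℝ}

lemma exists_isTestFun_near (hf : IsC1TestFun Ω f) {K : Set (Euc d)} (hK : IsCompact K)
    (hfK : tsupport f ⊆ interior K) (hKΩ : K ⊆ Ω) {ε : ℝ} (hε : 0 < ε) :
    ∃ g : Euc d → ℝ, IsTestFun Ω g ∧ tsupport g ⊆ K ∧ (∀ x, ‖g x - f x‖ ≤ ε) ∧
      ∀ x, ‖gradient g x - gradient f x‖ ≤ ε := by
  obtain ⟨δ, hδ, hδK⟩ := hf.hasCompactSupport.isCompact.exists_cthickening_subset_open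
    isOpen_interior hfK
  obtain ⟨r₁, hr₁, hf_near⟩ := exists_norm_normed_convolution_sub_le (μ := volume) hf.continuous
    hf.hasCompactSupport hε
  obtain ⟨r₂, hr₂, hf'_near⟩ := exists_norm_normed_convolution_sub_le (μ := volume)
    (hf.contDiff.continuous_fderiv one_ne_zero) (hf.hasCompactSupport.fderiv ℝ) hε
  set r := min δ (min r₁ r₂)
  have hr : 0 < r := by positivity
  let φ : ContDiffBump (0 : Euc d) := ⟨r / 2, r, by positivity, by linarith⟩
  set g := φ.normed volume ⋆[ContinuousLinearMap.lsmul ℝ ℝ, volume] f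
  have hgK : tsupport g ⊆ K := calc
    tsupport g ⊆ Metric.cthickening r (tsupport f) := tsupport_normed_convolution_subset φ f
    _ ⊆ Metric.cthickening δ (tsupport f) := Metric.cthickening_mono (min_le_left _ _) _
    _ ⊆ K := hδK.trans interior_subset
  have hg_smooth : ContDiff ℝ (⊤ : ℕ∞) g :=
    φ.hasCompactSupport_normed.contDiff_convolution_left _ φ.contDiff_normed
      hf.continuous.locallyIntegrable
  refine ⟨g, ⟨hg_smooth, hK.of_isClosed_subset (isClosed_tsupport g) hgK, hgK.trans hKΩ⟩, hgK,
    hf_near φ ((min_le_right _ _).trans (min_le_left _ _)), fun x ↦ ?_⟩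
  rw [gradient, gradient, ← map_sub, LinearIsometryEquiv.norm_map,
    fderiv_normed_convolution hf.contDiff hf.hasCompactSupport]
  exact hf'_near φ ((min_le_right _ _).trans (min_le_right _ _)) x

lemma tendsto_setIntegral_norm_sub_rpow_of_forall_norm_sub_le {X E : Type*} [MeasurableSpace X]
    [NormedAddCommGroup E] {μ : Measure X} {K : Set X} (hK : μ K ≠ ⊤) {p : ℝ} (hp : 0 < p)
    {f : ℕ → X → E} {g : X → E} (hfg : ∀ n x, ‖f n x - g x‖ ≤ 1 / ((n : ℝ) + 1)) :
    Tendsto (fun n ↦ ∫ x in K, ‖f n x - g x‖ ^ p ∂μ) atTop (𝓝 0) := by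
  have hlim : Tendsto (fun n : ℕ ↦ (1 / ((n : ℝ) + 1)) ^ p * μ.real K) atTop (𝓝 0) := by
    simpa [hp.ne'] using ((tendsto_one_div_add_atTop_nhds_zero_nat (𝕜 := ℝ)).rpow_const
      (Or.inr hp.le)).mul_const (μ.real K)
  refine squeeze_zero (fun n ↦ integral_nonneg fun x ↦ by positivity) (fun n ↦ ?_) hlim
  refine (Real.le_norm_self _).trans (norm_setIntegral_le_of_norm_le_const hK.lt_top fun x _ ↦ ?_)
  rw [Real.norm_of_nonneg (by positivity)]
  gcongr
  exact hfg n x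

theorem IsC1TestFun.energyQ_nonneg (hΩ : IsOpen Ω) {V : Euc d → ℝ} (hV : LocBddPotential Ω V)
    {p : ℝ} (hp : 1 < p) (hQ : ∀ u : Euc d → ℝ, IsTestFun Ω u → 0 ≤ energyQ Ω V p u)
    (hf : IsC1TestFun Ω f) : 0 ≤ energyQ Ω V p f := by
  obtain ⟨K, hK, hfK, hKΩ⟩ := exists_compact_between hf.hasCompactSupport hΩ hf.tsupport_subset
  have hp₀ : 0 < p := by linarith
  choose g hg hgK hgf hgf' using fun n : ℕ ↦
    exists_isTestFun_near hf hK hfK hKΩ (Nat.one_div_pos_of_nat (α := ℝ) (n := n))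
  obtain ⟨C, hC⟩ := hV.2 K hKΩ hK
  have hgrad := tendsto_setIntegral_mul_norm_rpow (μ := volume) (m := fun _ ↦ 1) (D := 1) hp hK
    aestronglyMeasurable_const (by simp)
    (fun n ↦ (hg n).isC1TestFun.continuous_gradient.continuousOn)
    hf.continuous_gradient.continuousOn
    (tendsto_setIntegral_norm_sub_rpow_of_forall_norm_sub_le hK.measure_ne_top hp₀ hgf')
  have hpot := tendsto_setIntegral_mul_norm_rpow (μ := volume) (m := V) hp hK
    hV.1.aestronglyMeasurable hC (fun n ↦ (hg n).isC1TestFun.continuous.continuousOn)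
    hf.continuous.continuousOn
    (tendsto_setIntegral_norm_sub_rpow_of_forall_norm_sub_le hK.measure_ne_top hp₀ hgf)
  have hlim : Tendsto (fun n ↦ energyQ Ω V p (g n)) atTop (𝓝 (energyQ Ω V p f)) := by
    simp_rw [fun n ↦ (hg n).isC1TestFun.energyQ_eq_setIntegral hp₀ hV (hgK n),
      hf.energyQ_eq_setIntegral hp₀ hV (hfK.trans interior_subset)]
    simpa only [one_mul, Real.norm_eq_abs] using hgrad.add hpot
  exact ge_of_tendsto' hlim fun n ↦ hQ _ (hg n)

end Mollification

section LowerSemicontinuity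

lemma tendsto_setIntegral_mul_of_tendsto_setIntegral_norm_rpow {X : Type*} [TopologicalSpace X]
    [MeasurableSpace X] [T2Space X] [BorelSpace X] {μ : Measure X} [IsFiniteMeasureOnCompacts μ]
    {K : Set X} {p : ℝ} (hp : 1 < p) (hK : IsCompact K) {m : X → ℝ} (hm : ContinuousOn m K)
    {ι : Type*} {l : Filter ι} {w : ι → X → ℝ} (hw : ∀ i, ContinuousOn (w i) K)
    (hlim : Tendsto (fun i ↦ ∫ x in K, ‖w i x‖ ^ p ∂μ) l (𝓝 0)) :
    Tendsto (fun i ↦ ∫ x in K, m x * w i x ∂μ) l (𝓝 0) := by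
  have hpq := Real.HolderConjugate.conjExponent hp
  have memLp : ∀ {h : X → ℝ} (q : ENNReal), ContinuousOn h K → MemLp h q (μ.restrict K) := by
    intro h q hh
    have := isFiniteMeasure_restrict.2 (hK.measure_ne_top (μ := μ))
    obtain ⟨C, hC⟩ := hK.exists_bound_of_continuousOn hh
    exact .of_bound (hh.aestronglyMeasurable hK.measurableSet) C
      ((ae_restrict_iff' hK.measurableSet).2 (ae_of_all _ hC))
  have hbound := (hlim.rpow_const (p := 1 / p) (Or.inr (by positivity))).mul_const
    ((∫ x in K, ‖m x‖ ^ p.conjExponent ∂μ) ^ (1 / p.conjExponent))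
  rw [Real.zero_rpow (by positivity), zero_mul] at hbound
  refine squeeze_zero_norm (fun i ↦ (norm_integral_le_integral_norm _).trans ?_) hbound
  simpa only [norm_mul, mul_comm] using
    integral_mul_norm_le_Lp_mul_Lq hpq (memLp _ (hw i)) (memLp _ hm)

variable {d : ℕ} {K : Set (Euc d)} {p : ℝ}

/-- The divergence `∑ i, ∂ᵢ ξᵢ` of a vector field on Euclidean space. -/
def divergence (ξ : Euc d → Euc d) (x : Euc d) : ℝ :=
  ∑ i, fderiv ℝ (fun y ↦ ξ y i) x (EuclideanSpace.single i 1)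

lemma continuous_divergence {ξ : Euc d → Euc d} (hξ : ContDiff ℝ 1 ξ) :
    Continuous (divergence ξ) := by
  refine continuous_finsetSum _ fun i _ ↦ Continuous.clm_apply ?_ continuous_const
  exact ((contDiff_piLp_apply 2).comp hξ).continuous_fderiv one_ne_zero

lemma divergence_eq_zero_of_notMem_tsupport {ξ : Euc d → Euc d} {x : Euc d}
    (hx : x ∉ tsupport ξ) : divergence ξ x = 0 := by
  refine Finset.sum_eq_zero fun i _ ↦ ?_
  have : (fun y ↦ ξ y i) =ᶠ[𝓝 x] fun _ ↦ 0 :=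
    (notMem_tsupport_iff_eventuallyEq.1 hx).mono fun y hy ↦ by simp [hy]
  simp [this.fderiv_eq]

lemma integral_inner_gradient_eq_neg {ξ : Euc d → Euc d} (hξ : ContDiff ℝ 1 ξ)
    (hξs : HasCompactSupport ξ) {h : Euc d → ℝ} (hh : ContDiff ℝ 1 h) :
    ∫ x, ⟪ξ x, gradient h x⟫ = -∫ x, divergence ξ x * h x := by
  have hξi : ∀ i, ContDiff ℝ 1 fun x ↦ ξ x i := fun i ↦ (contDiff_piLp_apply 2).comp hξ
  have hξis : ∀ i, HasCompactSupport fun x ↦ ξ x i := fun i ↦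
    hξs.comp_left (g := fun z : Euc d ↦ z i) rfl
  have hdξ : ∀ i, Continuous fun x ↦ fderiv ℝ (fun y ↦ ξ y i) x (EuclideanSpace.single i 1) :=
    fun i ↦ ((hξi i).continuous_fderiv one_ne_zero).clm_apply continuous_const
  have hdh : ∀ i, Continuous fun x ↦ fderiv ℝ h x (EuclideanSpace.single i 1) :=
    fun i ↦ (hh.continuous_fderiv one_ne_zero).clm_apply continuous_const
  have hdξh : ∀ i, Integrable fun x ↦
      fderiv ℝ (fun y ↦ ξ y i) x (EuclideanSpace.single i 1) * h x := fun i ↦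
    ((hdξ i).mul hh.continuous).integrable_of_hasCompactSupport
      (((hξis i).fderiv_apply ℝ _).mul_right)
  have hξdh : ∀ i, Integrable fun x ↦ ξ x i * fderiv ℝ h x (EuclideanSpace.single i 1) := fun i ↦
    ((hξi i).continuous.mul (hdh i)).integrable_of_hasCompactSupport (hξis i).mul_right
  have hinner : ∀ x, ⟪ξ x, gradient h x⟫ =
      ∑ i, ξ x i * fderiv ℝ h x (EuclideanSpace.single i 1) := fun x ↦ by
    rw [real_inner_comm, gradient, InnerProductSpace.toDual_symm_apply]
    conv_lhs => rw [← (EuclideanSpace.basisFun (Fin d) ℝ).sum_repr (ξ x), map_sum]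
    simp
  simp_rw [hinner, divergence, Finset.sum_mul]
  rw [integral_finsetSum _ fun i _ ↦ hξdh i, integral_finsetSum _ fun i _ ↦ hdξh i,
    ← Finset.sum_neg_distrib]
  refine Finset.sum_congr rfl fun i _ ↦ ?_
  exact integral_mul_fderiv_eq_neg_fderiv_mul_of_integrable (hdξh i) (hξdh i)
    (((hξi i).continuous.mul hh.continuous).integrable_of_hasCompactSupport (hξis i).mul_right)
    (fun x _ ↦ (hξi i).differentiable one_ne_zero x) fun x _ ↦ hh.differentiable one_ne_zero x

variable {ι : Type*} {l : Filter ι} {u : ι → Euc d → ℝ} {v : Euc d → ℝ}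

lemma tendsto_integral_inner_gradient (hp : 1 < p) (hK : IsCompact K) {ξ : Euc d → Euc d}
    (hξ : ContDiff ℝ 1 ξ) (hξK : tsupport ξ ⊆ K) (hu : ∀ i, ContDiff ℝ 1 (u i))
    (hv : ContDiff ℝ 1 v) (huv : Tendsto (fun i ↦ ∫ x in K, ‖u i x - v x‖ ^ p) l (𝓝 0)) :
    Tendsto (fun i ↦ ∫ x, ⟪ξ x, gradient (u i) x⟫) l (𝓝 (∫ x, ⟪ξ x, gradient v x⟫)) := by
  have hξs : HasCompactSupport ξ := hK.of_isClosed_subset (isClosed_tsupport ξ) hξK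
  have hparts : ∀ h : Euc d → ℝ, ContDiff ℝ 1 h →
      ∫ x, ⟪ξ x, gradient h x⟫ = -∫ x in K, divergence ξ x * h x := fun h hh ↦ by
    rw [integral_inner_gradient_eq_neg hξ hξs hh,
      setIntegral_eq_integral_of_forall_compl_eq_zero fun x hx ↦ ?_]
    rw [divergence_eq_zero_of_notMem_tsupport fun h ↦ hx (hξK h), zero_mul]
  have hdiv := (continuous_divergence hξ).continuousOn (s := K)
  simp_rw [hparts v hv, fun i ↦ hparts (u i) (hu i)]
  refine (tendsto_sub_nhds_zero_iff.1 ?_).neg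
  refine (tendsto_setIntegral_mul_of_tendsto_setIntegral_norm_rpow hp hK hdiv
    (fun i ↦ (hu i).continuous.continuousOn.sub hv.continuous.continuousOn) huv).congr fun i ↦ ?_
  simp_rw [Pi.sub_apply, mul_sub]
  exact integral_sub ((hdiv.mul (hu i).continuous.continuousOn).integrableOn_compact hK)
    ((hdiv.mul hv.continuous.continuousOn).integrableOn_compact hK)

/- `‖a‖ ^ p` is the supremum over `ξ` of the affine functions `⟪ξ, a⟫ - conjNormRpow p ξ`, and
for a `C¹` field `ξ` the pairing with the gradient passes to the limit. -/
lemma integral_mul_inner_sub_conjNormRpow_le [l.NeBot] (hp : 1 < p) (hK : IsCompact K)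
    {ρ : Euc d → ℝ} (hρ : ContDiff ℝ 1 ρ) (hρ₀ : ∀ x, 0 ≤ ρ x) (hρK : tsupport ρ ⊆ K)
    (hu : ∀ i, ContDiff ℝ 1 (u i)) (hv : ContDiff ℝ 1 v)
    (huv : Tendsto (fun i ↦ ∫ x in K, ‖u i x - v x‖ ^ p) l (𝓝 0)) {b : ι → ℝ} {B : ℝ}
    (hub : ∀ i, ∫ x, ρ x * ‖gradient (u i) x‖ ^ p ≤ b i) (hb : Tendsto b l (𝓝 B))
    {ξ : Euc d → Euc d} (hξ : ContDiff ℝ 1 ξ) :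
    ∫ x, ρ x * (⟪ξ x, gradient v x⟫ - conjNormRpow p (ξ x)) ≤ B := by
  have hρs : HasCompactSupport ρ := hK.of_isClosed_subset (isClosed_tsupport ρ) hρK
  have hint : ∀ {g : Euc d → ℝ}, Continuous g → Integrable fun x ↦ ρ x * g x := fun hg ↦
    (hρ.continuous.mul hg).integrable_of_hasCompactSupport hρs.mul_right
  have hconj : Integrable fun x ↦ ρ x * conjNormRpow p (ξ x) :=
    hint ((continuous_conjNormRpow hp).comp hξ.continuous)
  have hinner : ∀ {g : Euc d → ℝ}, ContDiff ℝ 1 g →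
      Integrable fun x ↦ ρ x * ⟪ξ x, gradient g x⟫ := fun hg ↦
    hint (hξ.continuous.inner (continuous_gradient_of_contDiff hg))
  have hsplit : ∀ {g : Euc d → ℝ}, ContDiff ℝ 1 g →
      ∫ x, ρ x * (⟪ξ x, gradient g x⟫ - conjNormRpow p (ξ x)) =
        (∫ x, ⟪ρ x • ξ x, gradient g x⟫) - ∫ x, ρ x * conjNormRpow p (ξ x) := fun hg ↦ by
    simp_rw [mul_sub, real_inner_smul_left]
    exact integral_sub (hinner hg) hconj
  rw [hsplit hv]
  refine le_of_tendsto_of_tendsto' ((tendsto_integral_inner_gradient hp hK (hρ.smul hξ)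
    ((tsupport_smul_subset_left ρ ξ).trans hρK) hu hv huv).sub_const _) hb fun i ↦ ?_
  refine (hsplit (hu i)).symm.trans_le ((integral_mono ?_ ?_ fun x ↦ ?_).trans (hub i))
  · simp_rw [mul_sub]
    exact (hinner (hu i)).sub hconj
  · exact hint ((continuous_gradient_of_contDiff (hu i)).norm.rpow_const
      fun _ ↦ Or.inr (by linarith))
  · exact mul_le_mul_of_nonneg_left
      (sub_le_iff_le_add.2 (inner_le_norm_rpow_add_conjNormRpow hp _ _)) (hρ₀ x)

lemma exists_seq_contDiff_tendsto {H F : Type*} [NormedAddCommGroup H] [NormedSpace ℝ H]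
    [FiniteDimensional ℝ H] [NormedAddCommGroup F] [NormedSpace ℝ F] {g : H → F}
    (hg : Continuous g) :
    ∃ ξ : ℕ → H → F, (∀ n, ContDiff ℝ 1 (ξ n)) ∧ (∀ n x, dist (ξ n x) (g x) ≤ 1) ∧
      ∀ x, Tendsto (ξ · x) atTop (𝓝 (g x)) := by
  choose ξ hξ hξg _ using fun n : ℕ ↦ hg.exists_contDiff_approx 1
    (continuous_const (y := 1 / ((n : ℝ) + 1))) fun _ ↦ Nat.one_div_pos_of_nat
  refine ⟨ξ, hξ, fun n x ↦ (hξg n x).le.trans ?_, fun x ↦ ?_⟩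
  · simpa using Nat.one_div_le_one_div (α := ℝ) (Nat.zero_le n)
  · exact tendsto_iff_dist_tendsto_zero.2 <| squeeze_zero (fun _ ↦ dist_nonneg)
      (fun n ↦ (hξg n x).le) tendsto_one_div_add_atTop_nhds_zero_nat

theorem integral_mul_norm_gradient_rpow_le_of_tendsto [l.NeBot] (hp : 1 < p) (hK : IsCompact K)
    {ρ : Euc d → ℝ} (hρ : ContDiff ℝ 1 ρ) (hρ₀ : ∀ x, 0 ≤ ρ x) (hρK : tsupport ρ ⊆ K)
    (hu : ∀ i, ContDiff ℝ 1 (u i)) (hv : ContDiff ℝ 1 v)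
    (huv : Tendsto (fun i ↦ ∫ x in K, ‖u i x - v x‖ ^ p) l (𝓝 0)) {b : ι → ℝ} {B : ℝ}
    (hub : ∀ i, ∫ x, ρ x * ‖gradient (u i) x‖ ^ p ≤ b i) (hb : Tendsto b l (𝓝 B)) :
    ∫ x, ρ x * ‖gradient v x‖ ^ p ≤ B := by
  have hρs : HasCompactSupport ρ := hK.of_isClosed_subset (isClosed_tsupport ρ) hρK
  have hgv := continuous_gradient_of_contDiff hv
  have hG : Continuous fun x ↦ gradNormRpow p (gradient v x) :=
    (continuous_gradNormRpow hp).comp hgv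
  obtain ⟨ξ, hξ, hξG, hlim⟩ := exists_seq_contDiff_tendsto hG
  let affine : Euc d × Euc d → ℝ := fun z ↦ ⟪z.1, z.2⟫ - conjNormRpow p z.1
  have haffine : Continuous affine :=
    (continuous_fst.inner continuous_snd).sub ((continuous_conjNormRpow hp).comp continuous_fst)
  obtain ⟨R, hR⟩ := hK.exists_bound_of_continuousOn hG.continuousOn
  obtain ⟨C, hC⟩ := ((isCompact_closedBall (0 : Euc d) (R + 1)).prod
    (hK.image hgv)).exists_bound_of_continuousOn haffine.continuousOn
  have hdom : ∀ n x, ‖ρ x * affine (ξ n x, gradient v x)‖ ≤ C * ρ x := fun n x ↦ by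
    by_cases hx : x ∈ K
    · rw [norm_mul, Real.norm_of_nonneg (hρ₀ x), mul_comm]
      refine mul_le_mul_of_nonneg_right (hC _ ⟨?_, x, hx, rfl⟩) (hρ₀ x)
      have := norm_le_norm_add_norm_sub' (ξ n x) (gradNormRpow p (gradient v x))
      rw [← dist_eq_norm] at this
      rw [mem_closedBall_zero_iff]
      linarith [hξG n x, hR x hx]
    · simp [image_eq_zero_of_notMem_tsupport fun h ↦ hx (hρK h)]
  have htendsto : Tendsto (fun n ↦ ∫ x, ρ x * affine (ξ n x, gradient v x)) atTop
      (𝓝 (∫ x, ρ x * ‖gradient v x‖ ^ p)) := by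
    refine tendsto_integral_of_dominated_convergence (fun x ↦ C * ρ x) (fun n ↦ ?_)
      ((hρ.continuous.integrable_of_hasCompactSupport hρs).const_mul C)
      (fun n ↦ ae_of_all _ (hdom n)) (ae_of_all _ fun x ↦ ?_)
    · exact (hρ.continuous.mul
        (haffine.comp ((hξ n).continuous.prodMk hgv))).aestronglyMeasurable
    · rw [← inner_gradNormRpow_self_sub_conjNormRpow hp]
      exact ((haffine.tendsto _).comp ((hlim x).prodMk_nhds tendsto_const_nhds)).const_mul _
  exact le_of_tendsto' htendsto fun n ↦
    integral_mul_inner_sub_conjNormRpow_le hp hK hρ hρ₀ hρK hu hv huv hub hb (hξ n)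

end LowerSemicontinuity

section FirstVariation

lemma norm_gradNormRpow_add_smul_le {H : Type*} [NormedAddCommGroup H] [InnerProductSpace ℝ H]
    {p : ℝ} (hp : 1 < p) (a b : H) {s : ℝ} (hs : ‖s‖ ≤ 1) :
    ‖gradNormRpow p (a + s • b)‖ ≤ p * (‖a‖ + ‖b‖) ^ (p - 1) := by
  have hnorm : ‖a + s • b‖ ≤ ‖a‖ + ‖b‖ := by
    refine (norm_add_le _ _).trans ?_
    rw [norm_smul]
    gcongr
    exact mul_le_of_le_one_left (norm_nonneg _) hs
  rw [norm_gradNormRpow hp]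
  gcongr

lemma hasDerivAt_setIntegral_mul_norm_rpow {X H : Type*} [TopologicalSpace X] [MeasurableSpace X]
    [T2Space X] [BorelSpace X] {μ : Measure X} [IsFiniteMeasureOnCompacts μ]
    [NormedAddCommGroup H] [InnerProductSpace ℝ H] [CompleteSpace H] {K : Set X} {p D : ℝ}
    {m : X → ℝ} {a b : X → H} (hp : 1 < p) (hK : IsCompact K)
    (hm : AEStronglyMeasurable m (μ.restrict K)) (hmD : ∀ x ∈ K, |m x| ≤ D)
    (ha : ContinuousOn a K) (hb : ContinuousOn b K) :
    HasDerivAt (fun s : ℝ ↦ ∫ x in K, m x * ‖a x + s • b x‖ ^ p ∂μ)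
      (∫ x in K, m x * ⟪gradNormRpow p (a x), b x⟫ ∂μ) 0 := by
  have hab : ∀ s : ℝ, ContinuousOn (fun x ↦ a x + s • b x) K := fun s ↦ ha.add (hb.const_smul s)
  have hint : ∀ s : ℝ, IntegrableOn (fun x ↦ m x * ‖a x + s • b x‖ ^ p) K μ := fun s ↦
    integrableOn_bdd_mul hK.measurableSet hm hmD (integrableOn_norm_rpow (by linarith) hK (hab s))
  have hderiv : ∀ x, ∀ s : ℝ, HasDerivAt (fun s : ℝ ↦ m x * ‖a x + s • b x‖ ^ p)
      (m x * ⟪gradNormRpow p (a x + s • b x), b x⟫) s := fun x s ↦ by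
    have hline : HasDerivAt (fun s : ℝ ↦ a x + s • b x) (b x) s := by
      simpa using ((hasDerivAt_id s).smul_const (b x)).const_add (a x)
    exact ((hasFDerivAt_norm_rpow_gradNormRpow hp _).comp_hasDerivAt s hline).const_mul (m x)
  have hbound : ∀ x ∈ K, ∀ s ∈ Metric.ball (0 : ℝ) 1,
      ‖m x * ⟪gradNormRpow p (a x + s • b x), b x⟫‖ ≤
        D * (p * (‖a x‖ + ‖b x‖) ^ (p - 1) * ‖b x‖) := fun x hx s hs ↦ by
    rw [norm_mul]
    refine mul_le_mul (hmD x hx) ((norm_inner_le_norm _ _).trans ?_) (norm_nonneg _)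
      ((abs_nonneg _).trans (hmD x hx))
    gcongr
    exact norm_gradNormRpow_add_smul_le hp _ _ (mem_ball_zero_iff.1 hs).le
  have hbound_int : IntegrableOn (fun x ↦ D * (p * (‖a x‖ + ‖b x‖) ^ (p - 1) * ‖b x‖)) K μ :=
    ((((ha.norm.add hb.norm).rpow_const fun _ _ ↦ Or.inr (by linarith)).const_smul p).mul
      hb.norm).const_smul D |>.integrableOn_compact hK
  have hmeas : AEStronglyMeasurable (fun x ↦ m x * ⟪gradNormRpow p (a x + (0 : ℝ) • b x), b x⟫)
      (μ.restrict K) :=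
    hm.mul ((((continuous_gradNormRpow hp).comp_continuousOn (hab 0)).inner
      hb).aestronglyMeasurable hK.measurableSet)
  simpa using (hasDerivAt_integral_of_dominated_loc_of_deriv_le (Metric.ball_mem_nhds 0 one_pos)
    (.of_forall fun s ↦ (hint s).aestronglyMeasurable) (hint 0) hmeas
    ((ae_restrict_iff' hK.measurableSet).2 (ae_of_all _ hbound)) hbound_int
    (ae_of_all _ fun x s _ ↦ hderiv x s)).2

lemma norm_convexComb_rpow_le {H : Type*} [NormedAddCommGroup H] [NormedSpace ℝ H] {p t : ℝ}
    (hp : 1 < p) (ht : t ∈ Set.Icc 0 1) (a b : H) :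
    ‖(1 - t ^ p) • a + t ^ (p - 1) • b‖ ^ p ≤ (1 - t ^ p) * ‖a‖ ^ p + ‖b‖ ^ p := by
  obtain ⟨ht₀, ht₁⟩ := ht
  rcases ht₀.eq_or_lt with rfl | ht₀
  · simp only [Real.zero_rpow (by linarith : p ≠ 0), Real.zero_rpow (by linarith : p - 1 ≠ 0)]
    simpa using Real.rpow_nonneg (norm_nonneg b) p
  have htp : t ^ p ≤ 1 := Real.rpow_le_one ht₀.le ht₁ (by linarith)
  have hsplit : t ^ (p - 1) = t ^ p * t⁻¹ := by rw [Real.rpow_sub_one ht₀.ne', div_eq_mul_inv]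
  have hnorm : ‖(1 - t ^ p) • a + t ^ (p - 1) • b‖ ≤
      (1 - t ^ p) * ‖a‖ + t ^ p * (t⁻¹ * ‖b‖) := by
    refine (norm_add_le _ _).trans_eq ?_
    rw [norm_smul, norm_smul, Real.norm_of_nonneg (sub_nonneg.2 htp),
      Real.norm_of_nonneg (by positivity), hsplit, mul_assoc]
  have hconv := (convexOn_rpow hp.le).2 (norm_nonneg a)
    (by positivity : 0 ≤ t⁻¹ * ‖b‖) (sub_nonneg.2 htp) (by positivity : 0 ≤ t ^ p) (by ring)
  refine (Real.rpow_le_rpow (norm_nonneg _) hnorm (by linarith)).trans (hconv.trans_eq ?_)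
  simp only [smul_eq_mul]
  rw [Real.mul_rpow (by positivity) (norm_nonneg b), Real.inv_rpow ht₀.le,
    mul_inv_cancel_left₀ (by positivity)]

/-- The competitor interpolating between `f` where `η = 1` and `u` where `η = 0`. The weight `η ^ p`
makes its energy density at most
`(1 - η ^ p) * ‖∇u‖ ^ p + ‖η • ∇f + (p * (f - u)) • ∇η‖ ^ p`, without any cross term. -/
def patch {E : Type*} (p : ℝ) (η u f : E → ℝ) (x : E) : ℝ := u x + (f x - u x) * η x ^ p

/-- Positive `C¹` weak solutions of `Q_V'(v) = 0`, tested against all `C¹` test functions (and with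
the factor `p` of the first variation kept inside `gradNormRpow`). -/
structure IsPositiveCriticalPoint {d : ℕ} (Ω : Set (Euc d)) (V : Euc d → ℝ) (p : ℝ)
    (v : Euc d → ℝ) : Prop where
  contDiffOn : ContDiffOn ℝ 1 v Ω
  pos : ∀ x ∈ Ω, 0 < v x
  firstVariation_eq_zero : ∀ φ, IsC1TestFun Ω φ →
    (∫ x, ⟪gradNormRpow p (gradient v x), gradient φ x⟫) +
      ∫ x, V x * ⟪gradNormRpow p (v x), φ x⟫ = 0

section Patch

variable {d : ℕ} {Ω K : Set (Euc d)} {V η u f v φ : Euc d → ℝ} {p : ℝ}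

lemma gradient_patch (hp : 1 < p) (hη : ContDiff ℝ 1 η) (hη₀ : ∀ x, 0 ≤ η x) (hu : ContDiff ℝ 1 u)
    (hf : ContDiff ℝ 1 f) (x : Euc d) :
    gradient (patch p η u f) x = (1 - η x ^ p) • gradient u x +
      η x ^ (p - 1) • (η x • gradient f x + (p * (f x - u x)) • gradient η x) := by
  have hη' := hη.differentiable one_ne_zero x
  have hu' := hu.differentiable one_ne_zero x
  have hf' := hf.differentiable one_ne_zero x
  have hηp : DifferentiableAt ℝ (fun y ↦ η y ^ p) x := hη'.rpow_const (Or.inr hp.le)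
  unfold patch
  rw [gradient_fun_add hu' ((hf'.fun_sub hu').fun_mul hηp), gradient_fun_mul (hf'.fun_sub hu') hηp,
    gradient_fun_sub hf' hu', gradient_fun_comp (Real.hasDerivAt_rpow_const (Or.inr hp.le)) hη',
    smul_add, smul_smul (η x ^ (p - 1)) (η x), rpow_sub_one_mul_self hp (hη₀ x)]
  module

lemma IsC1TestFun.rpow (hp : 1 < p) (hη : IsC1TestFun Ω η) : IsC1TestFun Ω (fun x ↦ η x ^ p) :=
  of_support_subset hη.hasCompactSupport hη.tsupport_subset
    (hη.contDiff.rpow_const_of_le (by simpa using hp.le)) fun x hx ↦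
      subset_tsupport η fun h ↦ hx (by simp [h, Real.zero_rpow (by linarith : p ≠ 0)])

lemma IsC1TestFun.patch (hΩ : IsOpen Ω) (hp : 1 < p) (hη : IsC1TestFun Ω η)
    (hu : IsC1TestFun Ω u) (hf : ContDiff ℝ 1 f) : IsC1TestFun Ω (patch p η u f) := by
  unfold _root_.patch
  simpa only [mul_comm] using
    hu.add ((hη.rpow hp).mul_contDiffOn hΩ (hf.sub hu.contDiff).contDiffOn)

lemma integral_norm_gradient_patch_rpow_add_le (hΩ : IsOpen Ω) (hp : 1 < p)
    (hη : IsC1TestFun Ω η) (hη₁ : ∀ x, η x ∈ Set.Icc 0 1) (hu : IsC1TestFun Ω u)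
    (hf : ContDiff ℝ 1 f) :
    (∫ x, ‖gradient (patch p η u f) x‖ ^ p) + ∫ x, η x ^ p * ‖gradient u x‖ ^ p ≤
      (∫ x, ‖gradient u x‖ ^ p) +
        ∫ x in tsupport η, ‖η x • gradient f x + (p * (f x - u x)) • gradient η x‖ ^ p := by
  have hp₀ : 0 < p := by linarith
  set b : Euc d → Euc d := fun x ↦ η x • gradient f x + (p * (f x - u x)) • gradient η x
  have hb : Continuous b :=
    (hη.continuous.smul (continuous_gradient_of_contDiff hf)).add
      ((continuous_const.mul (hf.continuous.sub hu.continuous)).smul hη.continuous_gradient)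
  have hb₀ : ∀ x ∉ tsupport η, ‖b x‖ ^ p = 0 := fun x hx ↦ by
    simp [b, gradient_eq_zero_of_notMem_tsupport hx, image_eq_zero_of_notMem_tsupport hx, hp₀.ne']
  have hb_int : Integrable fun x ↦ ‖b x‖ ^ p :=
    (integrableOn_iff_integrable_of_support_subset fun x hx ↦ of_not_not (mt (hb₀ x) hx)).1
      (integrableOn_norm_rpow hp₀.le hη.hasCompactSupport hb.continuousOn)
  have hgu := hu.integrable_norm_gradient_rpow hp₀
  have hgz := (hη.patch hΩ hp hu hf).integrable_norm_gradient_rpow hp₀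
  have hρgu : Integrable fun x ↦ η x ^ p * ‖gradient u x‖ ^ p :=
    ((hη.rpow hp).continuous.mul (hu.continuous_gradient.norm.rpow_const
      fun _ ↦ Or.inr hp₀.le)).integrable_of_hasCompactSupport
        (hη.rpow hp).hasCompactSupport.mul_right
  rw [setIntegral_eq_integral_of_forall_compl_eq_zero hb₀, ← integral_add hgz hρgu,
    ← integral_add hgu hb_int]
  refine integral_mono (hgz.add hρgu) (hgu.add hb_int) fun x ↦ ?_
  simp only [gradient_patch hp hη.contDiff (fun x ↦ (hη₁ x).1) hu.contDiff hf x]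
  linarith [norm_convexComb_rpow_le hp (hη₁ x) (gradient u x) (b x)]

lemma integral_potential_mul_patch_rpow_sub (hΩ : IsOpen Ω) (hp : 1 < p) (hV : LocBddPotential Ω V)
    (hη : IsC1TestFun Ω η) (hu : IsC1TestFun Ω u) (hf : ContDiff ℝ 1 f) :
    (∫ x, V x * |patch p η u f x| ^ p) - ∫ x, V x * |u x| ^ p =
      (∫ x in tsupport η, V x * |patch p η u f x| ^ p) -
        ∫ x in tsupport η, V x * |u x| ^ p := by
  have hp₀ : 0 < p := by linarith
  have hVz := (hη.patch hΩ hp hu hf).integrable_potential_mul_rpow hp₀ hV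
  have hVu := hu.integrable_potential_mul_rpow hp₀ hV
  rw [← integral_sub hVz hVu, ← integral_sub hVz.integrableOn hVu.integrableOn]
  refine (setIntegral_eq_integral_of_forall_compl_eq_zero fun x hx ↦ ?_).symm
  simp [patch, image_eq_zero_of_notMem_tsupport hx, hp₀.ne']

lemma integral_rpow_mul_norm_gradient_rpow_le (hΩ : IsOpen Ω) (hp : 1 < p)
    (hV : LocBddPotential Ω V) (hQ : ∀ w, IsC1TestFun Ω w → 0 ≤ energyQ Ω V p w)
    (hη : IsC1TestFun Ω η) (hη₁ : ∀ x, η x ∈ Set.Icc 0 1) (hu : IsC1TestFun Ω u)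
    (hf : ContDiff ℝ 1 f) :
    ∫ x, η x ^ p * ‖gradient u x‖ ^ p ≤ energyQ Ω V p u +
      ((∫ x in tsupport η, ‖η x • gradient f x + (p * (f x - u x)) • gradient η x‖ ^ p) +
        ((∫ x in tsupport η, V x * |patch p η u f x| ^ p) -
          ∫ x in tsupport η, V x * |u x| ^ p)) := by
  have hp₀ : 0 < p := by linarith
  have hz := hη.patch hΩ hp hu hf
  have hQz := hQ _ hz
  rw [hz.energyQ_eq hp₀ hV] at hQz
  rw [hu.energyQ_eq hp₀ hV, ← integral_potential_mul_patch_rpow_sub hΩ hp hV hη hu hf]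
  linarith [integral_norm_gradient_patch_rpow_add_le hΩ hp hη hη₁ hu hf]

lemma tendsto_integral_norm_smul_gradient_add_rpow (hp : 1 < p) (hη : IsC1TestFun Ω η)
    {ι : Type*} {l : Filter ι} {u : ι → Euc d → ℝ} (hu : ∀ i, Continuous (u i))
    (hv : Continuous v) (hf : ContDiff ℝ 1 f)
    (hfv : ∀ x, f x ≠ v x → η =ᶠ[𝓝 x] fun _ ↦ 1)
    (huv : Tendsto (fun i ↦ ∫ x in tsupport η, ‖u i x - v x‖ ^ p) l (𝓝 0)) :
    Tendsto (fun i ↦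
        ∫ x in tsupport η, ‖η x • gradient f x + (p * (f x - u i x)) • gradient η x‖ ^ p) l
      (𝓝 (∫ x in tsupport η, ‖η x • gradient f x‖ ^ p)) := by
  have hgf := continuous_gradient_of_contDiff hf
  obtain ⟨M, hM⟩ := hη.hasCompactSupport.isCompact.exists_bound_of_continuousOn
    hη.continuous_gradient.continuousOn
  have herr : ∀ i, ∀ x ∈ tsupport η, ‖η x • gradient f x + (p * (f x - u i x)) • gradient η x -
      η x • gradient f x‖ ≤ p * |M| * ‖u i x - v x‖ := fun i x hx ↦ by
    rw [add_sub_cancel_left, norm_smul, norm_mul, Real.norm_of_nonneg (by linarith : 0 ≤ p),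
      norm_sub_rev]
    rcases eq_or_ne (f x) (v x) with h | h
    · rw [h, mul_right_comm]
      gcongr
      exact (hM x hx).trans (le_abs_self M)
    · rw [(hfv x h).gradient_eq, gradient_fun_const, norm_zero, mul_zero]
      positivity
  have hcont : ∀ i, Continuous fun x ↦
      η x • gradient f x + (p * (f x - u i x)) • gradient η x := fun i ↦
    (hη.continuous.smul hgf).add
      ((continuous_const.mul (hf.continuous.sub (hu i))).smul hη.continuous_gradient)
  have hcont' : Continuous fun x ↦ η x • gradient f x := hη.continuous.smul hgf
  have herr_lim := tendsto_setIntegral_norm_rpow_of_norm_le (μ := volume) (by linarith : 0 ≤ p)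
    hη.hasCompactSupport (by positivity) herr
    (fun i ↦ ((hu i).sub hv).continuousOn) huv
  simpa only [one_mul] using tendsto_setIntegral_mul_norm_rpow (μ := volume) (m := fun _ ↦ 1)
    (D := 1) hp hη.hasCompactSupport aestronglyMeasurable_const (by simp)
    (fun i ↦ (hcont i).continuousOn) hcont'.continuousOn herr_lim

lemma tendsto_integral_potential_mul_patch_rpow (hp : 1 < p) (hV : LocBddPotential Ω V)
    (hη : IsC1TestFun Ω η) (hη₁ : ∀ x, η x ∈ Set.Icc 0 1)
    {ι : Type*} {l : Filter ι} {u : ι → Euc d → ℝ} (hu : ∀ i, Continuous (u i))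
    (hv : Continuous v) (hf : Continuous f)
    (hfv : ∀ x, f x ≠ v x → η x = 1)
    (huv : Tendsto (fun i ↦ ∫ x in tsupport η, ‖u i x - v x‖ ^ p) l (𝓝 0)) :
    Tendsto (fun i ↦ ∫ x in tsupport η, V x * |patch p η (u i) f x| ^ p) l
      (𝓝 (∫ x in tsupport η, V x * |f x| ^ p)) := by
  have hp₀ : 0 < p := by linarith
  obtain ⟨D, hD⟩ := hV.2 _ hη.tsupport_subset hη.hasCompactSupport
  have herr : ∀ i, ∀ x ∈ tsupport η, ‖patch p η (u i) f x - f x‖ ≤ 1 * ‖u i x - v x‖ := by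
    intro i x _
    rcases eq_or_ne (f x) (v x) with h | h
    · have h₀ : 0 ≤ η x ^ p := Real.rpow_nonneg (hη₁ x).1 p
      have h₁ : η x ^ p ≤ 1 := Real.rpow_le_one (hη₁ x).1 (hη₁ x).2 hp₀.le
      rw [patch, h, show u i x + (v x - u i x) * η x ^ p - v x =
        (1 - η x ^ p) * (u i x - v x) by ring, norm_mul, Real.norm_of_nonneg (sub_nonneg.2 h₁)]
      gcongr
      linarith
    · simp [patch, hfv x h]
  have hpatch : ∀ i, Continuous (patch p η (u i) f) := fun i ↦
    (hu i).add ((hf.sub (hu i)).mul (hη.continuous.rpow_const fun _ ↦ Or.inr hp₀.le))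
  simpa only [Real.norm_eq_abs] using tendsto_setIntegral_mul_norm_rpow (μ := volume) hp
    hη.hasCompactSupport hV.1.aestronglyMeasurable hD (fun i ↦ (hpatch i).continuousOn)
    hf.continuousOn (tendsto_setIntegral_norm_rpow_of_norm_le hp₀.le hη.hasCompactSupport
      zero_le_one herr (fun i ↦ ((hu i).sub hv).continuousOn) huv)

lemma integral_localized_energy_le (hΩ : IsOpen Ω) (hp : 1 < p) (hV : LocBddPotential Ω V)
    (hQ : ∀ w, IsC1TestFun Ω w → 0 ≤ energyQ Ω V p w) (hη : IsC1TestFun Ω η)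
    (hη₁ : ∀ x, η x ∈ Set.Icc 0 1) {ι : Type*} {l : Filter ι} [l.NeBot] {u : ι → Euc d → ℝ}
    (hu : ∀ i, IsC1TestFun Ω (u i)) (hQu : Tendsto (fun i ↦ energyQ Ω V p (u i)) l (𝓝 0))
    (hv : ContDiff ℝ 1 v) (huv : Tendsto (fun i ↦ ∫ x in tsupport η, ‖u i x - v x‖ ^ p) l (𝓝 0))
    (hf : ContDiff ℝ 1 f) (hfv : ∀ x, f x ≠ v x → η =ᶠ[𝓝 x] fun _ ↦ 1) :
    (∫ x in tsupport η, η x ^ p * ‖gradient v x‖ ^ p) + ∫ x in tsupport η, V x * |v x| ^ p ≤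
      (∫ x in tsupport η, η x ^ p * ‖gradient f x‖ ^ p) + ∫ x in tsupport η, V x * |f x| ^ p := by
  have hp₀ : 0 < p := by linarith
  have hu_cont : ∀ i, Continuous (u i) := fun i ↦ (hu i).continuous
  obtain ⟨D, hD⟩ := hV.2 _ hη.tsupport_subset hη.hasCompactSupport
  have hVu : Tendsto (fun i ↦ ∫ x in tsupport η, V x * |u i x| ^ p) l
      (𝓝 (∫ x in tsupport η, V x * |v x| ^ p)) := by
    simpa only [Real.norm_eq_abs] using tendsto_setIntegral_mul_norm_rpow (μ := volume) hp
      hη.hasCompactSupport hV.1.aestronglyMeasurable hD (fun i ↦ (hu_cont i).continuousOn)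
      hv.continuous.continuousOn huv
  have hupper : Tendsto _ l (𝓝 _) := hQu.add
    ((tendsto_integral_norm_smul_gradient_add_rpow hp hη hu_cont hv.continuous hf hfv huv).add
      ((tendsto_integral_potential_mul_patch_rpow hp hV hη hη₁ hu_cont hv.continuous hf.continuous
        (fun x hx ↦ (hfv x hx).eq_of_nhds) huv).sub hVu))
  have hlsc := integral_mul_norm_gradient_rpow_le_of_tendsto hp hη.hasCompactSupport
    (hη.rpow hp).contDiff (fun x ↦ Real.rpow_nonneg (hη₁ x).1 p)
    (closure_mono fun x hx h ↦ hx (by simp [h, hp₀.ne'])) (fun i ↦ (hu i).contDiff) hv huv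
    (fun i ↦ integral_rpow_mul_norm_gradient_rpow_le hΩ hp hV hQ hη hη₁ (hu i) hf) hupper
  rw [← setIntegral_eq_integral_of_forall_compl_eq_zero (s := tsupport η) fun x hx ↦ by
    simp [image_eq_zero_of_notMem_tsupport hx, hp₀.ne']] at hlsc
  have hnorm : ∀ x, ‖η x • gradient f x‖ ^ p = η x ^ p * ‖gradient f x‖ ^ p := fun x ↦ by
    rw [norm_smul, Real.norm_of_nonneg (hη₁ x).1, Real.mul_rpow (hη₁ x).1 (norm_nonneg _)]
  simp only [hnorm] at hlsc
  linarith

lemma setIntegral_firstVariation_eq_zero (hΩ : IsOpen Ω) (hp : 1 < p) (hV : LocBddPotential Ω V)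
    (hQ : ∀ w, IsC1TestFun Ω w → 0 ≤ energyQ Ω V p w) (hη : IsC1TestFun Ω η)
    (hη₁ : ∀ x, η x ∈ Set.Icc 0 1) {ι : Type*} {l : Filter ι} [l.NeBot] {u : ι → Euc d → ℝ}
    (hu : ∀ i, IsC1TestFun Ω (u i)) (hQu : Tendsto (fun i ↦ energyQ Ω V p (u i)) l (𝓝 0))
    (hv : ContDiff ℝ 1 v) (huv : Tendsto (fun i ↦ ∫ x in tsupport η, ‖u i x - v x‖ ^ p) l (𝓝 0))
    (hφ : ContDiff ℝ 1 φ) (hηφ : ∀ x ∈ tsupport φ, η =ᶠ[𝓝 x] fun _ ↦ 1) :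
    (∫ x in tsupport η, η x ^ p * ⟪gradNormRpow p (gradient v x), gradient φ x⟫) +
      ∫ x in tsupport η, V x * ⟪gradNormRpow p (v x), φ x⟫ = 0 := by
  have hηK : IsCompact (tsupport η) := hη.hasCompactSupport
  obtain ⟨D, hD⟩ := hV.2 _ hη.tsupport_subset hηK
  have hη_le : ∀ x ∈ tsupport η, |η x ^ p| ≤ 1 := fun x _ ↦ by
    rw [abs_of_nonneg (Real.rpow_nonneg (hη₁ x).1 p)]
    exact Real.rpow_le_one (hη₁ x).1 (hη₁ x).2 (by linarith)
  have hderiv := (hasDerivAt_setIntegral_mul_norm_rpow (μ := volume) hp hηK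
      (hη.rpow hp).continuous.aestronglyMeasurable hη_le
      (continuous_gradient_of_contDiff hv).continuousOn
      (continuous_gradient_of_contDiff hφ).continuousOn).fun_add
    (hasDerivAt_setIntegral_mul_norm_rpow (μ := volume) hp hηK hV.1.aestronglyMeasurable hD
      hv.continuous.continuousOn hφ.continuous.continuousOn)
  refine IsLocalMin.hasDerivAt_eq_zero (.of_forall fun s ↦ ?_) hderiv
  have hφ_ne : ∀ x, v x + s * φ x ≠ v x → x ∈ tsupport φ := fun x hx ↦
    subset_tsupport φ fun h ↦ hx (by simp [h])
  have hmin := integral_localized_energy_le hΩ hp hV hQ hη hη₁ hu hQu hv huv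
    (hv.add (contDiff_const.mul hφ)) fun x hx ↦ hηφ x (hφ_ne x hx)
  have hgrad : ∀ x, gradient (fun x ↦ v x + s * φ x) x = gradient v x + s • gradient φ x :=
    fun x ↦ by
      have hφ' := hφ.differentiable one_ne_zero x
      rw [gradient_fun_add (hv.differentiable one_ne_zero x) (hφ'.const_mul s),
        gradient_fun_mul (differentiableAt_const s) hφ', gradient_fun_const, smul_zero, add_zero]
  simpa [hgrad] using hmin

theorem IsGroundState.isPositiveCriticalPoint (hΩ : IsOpen Ω) (hp : 1 < p)
    (hV : LocBddPotential Ω V) (hQ : ∀ w, IsC1TestFun Ω w → 0 ≤ energyQ Ω V p w)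
    (hv : IsGroundState Ω V p v) : IsPositiveCriticalPoint Ω V p v := by
  obtain ⟨hv, hv_pos, u, ⟨hu, -, _, -, -, -, -, hQu⟩, huv⟩ := hv
  refine ⟨hv, hv_pos, fun φ hφ ↦ ?_⟩
  obtain ⟨η, hη, hη₁, hηφ⟩ :=
    IsC1TestFun.exists_eventuallyEq_one hΩ hφ.hasCompactSupport hφ.tsupport_subset
  obtain ⟨χ, hχ, -, hχη⟩ :=
    IsC1TestFun.exists_eventuallyEq_one hΩ hη.hasCompactSupport hη.tsupport_subset
  have hηK : MeasurableSet (tsupport η) := (isClosed_tsupport η).measurableSet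
  have hvχ : ∀ x ∈ tsupport η, (fun y ↦ χ y * v y) =ᶠ[𝓝 x] v := fun x hx ↦
    (hχη x hx).mono fun y hy ↦ by simp [hy]
  have huvχ : Tendsto (fun k ↦ ∫ x in tsupport η, ‖u k x - χ x * v x‖ ^ p) atTop (𝓝 0) :=
    (huv _ hη.tsupport_subset hη.hasCompactSupport).congr fun k ↦
      setIntegral_congr_fun hηK fun x hx ↦ by
        simp only [(hvχ x hx).eq_of_nhds, Real.norm_eq_abs]
  have hvar := setIntegral_firstVariation_eq_zero hΩ hp hV hQ hη hη₁
    (fun k ↦ (hu k).isC1TestFun) hQu (hχ.mul_contDiffOn hΩ hv).contDiff huvχ hφ.contDiff hηφ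
  have hφη : tsupport φ ⊆ tsupport η := fun x hx ↦
    subset_tsupport η (by simp [(hηφ x hx).eq_of_nhds])
  have hgrad_zero : ∀ x ∉ tsupport φ, gradient φ x = 0 := fun x ↦
    gradient_eq_zero_of_notMem_tsupport
  have hset : ∀ f : Euc d → ℝ, (∀ x ∉ tsupport φ, f x = 0) →
      ∫ x, f x = ∫ x in tsupport η, f x := fun f hf ↦
    (setIntegral_eq_integral_of_forall_compl_eq_zero fun x hx ↦ hf x (mt (@hφη x) hx)).symm
  rw [hset _ fun x hx ↦ by rw [hgrad_zero x hx, inner_zero_right], hset _ fun x hx ↦ by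
    rw [image_eq_zero_of_notMem_tsupport hx, inner_zero_right, mul_zero], ← hvar]
  refine congr_arg₂ (· + ·) (setIntegral_congr_fun hηK fun x hx ↦ ?_)
    (setIntegral_congr_fun hηK fun x hx ↦ by simp only [(hvχ x hx).eq_of_nhds])
  by_cases hxφ : x ∈ tsupport φ
  · simp only [(hvχ x hx).gradient_eq, (hηφ x hxφ).eq_of_nhds, Real.one_rpow, one_mul]
  · simp only [hgrad_zero x hxφ, inner_zero_right, mul_zero]

end Patch

end FirstVariation

section Picone

variable {d : ℕ} {Ω K : Set (Euc d)} {V r v φ : Euc d → ℝ} {p : ℝ}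

lemma hasDerivAt_abs_rpow_gradNormRpow (hp : 1 < p) (a : ℝ) :
    HasDerivAt (fun a : ℝ ↦ |a| ^ p) (gradNormRpow p a) a := by
  simpa using (hasFDerivAt_norm_rpow_gradNormRpow hp a).hasDerivAt

lemma IsC1TestFun.abs_rpow (hp : 1 < p) (hr : IsC1TestFun Ω r) :
    IsC1TestFun Ω (fun x ↦ |r x| ^ p) :=
  of_support_subset hr.hasCompactSupport hr.tsupport_subset
    (by simpa [Function.comp_def] using (contDiff_norm_rpow hp).comp hr.contDiff) fun x hx ↦
      subset_tsupport r fun h ↦ hx (by simp [h, Real.zero_rpow (by linarith : p ≠ 0)])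

lemma norm_gradient_mul_rpow_eq_bregman_add (hp : 1 < p) {x : Euc d}
    (hr : DifferentiableAt ℝ r x) (hv : DifferentiableAt ℝ v x) :
    ‖gradient (fun y ↦ r y * v y) x‖ ^ p =
      bregman p (gradient (fun y ↦ r y * v y) x) (r x • gradient v x) +
        p⁻¹ * ⟪gradNormRpow p (gradient v x), gradient (fun y ↦ |r y| ^ p * v y) x⟫ := by
  have hp₀ : p ≠ 0 := by linarith
  have hrp := hasDerivAt_abs_rpow_gradNormRpow hp (r x)
  have hrr : |r x| ^ (p - 2) * r x * r x = |r x| ^ p := by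
    rw [mul_assoc, ← abs_mul_abs_self, ← mul_assoc, rpow_sub_two_mul_self hp (abs_nonneg _),
      rpow_sub_one_mul_self hp (abs_nonneg _)]
  have hrp' : DifferentiableAt ℝ (fun y ↦ |r y| ^ p) x := hrp.differentiableAt.comp x hr
  rw [bregman_eq hp, gradient_fun_mul hrp' hv,
    gradient_fun_comp hrp hr, gradient_fun_mul hr hv, gradNormRpow_smul, real_inner_smul_left,
    norm_smul, Real.norm_eq_abs, Real.mul_rpow (abs_nonneg _) (norm_nonneg _)]
  simp only [inner_add_right, inner_smul_right, inner_gradNormRpow_self hp]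
  rw [show gradNormRpow p (r x) = p * |r x| ^ (p - 2) * r x from rfl, ← hrr]
  field_simp
  ring

lemma abs_mul_rpow_eq_inner_gradNormRpow (hp : 1 < p) (a b : ℝ) :
    |a * b| ^ p = p⁻¹ * ⟪gradNormRpow p b, |a| ^ p * b⟫ := by
  have hp₀ : p ≠ 0 := by linarith
  rw [← smul_eq_mul (a := |a| ^ p), inner_smul_right, inner_gradNormRpow_self hp, abs_mul,
    Real.mul_rpow (abs_nonneg _) (abs_nonneg _), Real.norm_eq_abs]
  field_simp

lemma IsC1TestFun.integrable_inner_gradient (hφ : IsC1TestFun Ω φ) {ξ : Euc d → Euc d}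
    (hξ : ContinuousOn ξ Ω) : Integrable fun x ↦ ⟪ξ x, gradient φ x⟫ := by
  rw [← integrableOn_iff_integrable_of_support_subset (s := tsupport φ)]
  · exact ((hξ.mono hφ.tsupport_subset).inner
      hφ.continuous_gradient.continuousOn).integrableOn_compact hφ.hasCompactSupport
  · intro x hx
    by_contra hxφ
    refine hx ?_
    simp only [gradient_eq_zero_of_notMem_tsupport hxφ, inner_zero_right]

namespace IsPositiveCriticalPoint

lemma norm_gradient_mul_rpow_eq (hv : IsPositiveCriticalPoint Ω V p v) (hΩ : IsOpen Ω)
    (hp : 1 < p) (hr : IsC1TestFun Ω r) (x : Euc d) :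
    ‖gradient (fun y ↦ r y * v y) x‖ ^ p =
      bregman p (gradient (fun y ↦ r y * v y) x) (r x • gradient v x) +
        p⁻¹ * ⟪gradNormRpow p (gradient v x), gradient (fun y ↦ |r y| ^ p * v y) x⟫ := by
  by_cases hx : x ∈ tsupport r
  · exact norm_gradient_mul_rpow_eq_bregman_add hp (hr.differentiableAt x)
      ((hv.contDiffOn.differentiableOn one_ne_zero).differentiableAt
        (hΩ.mem_nhds (hr.tsupport_subset hx)))
  have hp₀ : p ≠ 0 := by linarith
  have hr₀ : r =ᶠ[𝓝 x] fun _ ↦ 0 := notMem_tsupport_iff_eventuallyEq.1 hx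
  have hw : (fun y ↦ r y * v y) =ᶠ[𝓝 x] fun _ ↦ 0 := hr₀.mono fun y hy ↦ by simp [hy]
  have hφ : (fun y ↦ |r y| ^ p * v y) =ᶠ[𝓝 x] fun _ ↦ 0 := hr₀.mono fun y hy ↦ by simp [hy, hp₀]
  simp only [hw.gradient_eq, hφ.gradient_eq, hr₀.eq_of_nhds, gradient_fun_const, bregman_eq hp,
    zero_smul, norm_zero, Real.zero_rpow hp₀, inner_zero_right]
  ring

lemma continuousOn_gradient (hv : IsPositiveCriticalPoint Ω V p v) (hΩ : IsOpen Ω) :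
    ContinuousOn (gradient v) Ω :=
  (InnerProductSpace.toDual ℝ (Euc d)).symm.continuous.comp_continuousOn
    (hv.contDiffOn.continuousOn_fderiv_of_isOpen hΩ le_rfl)

lemma integrable_inner_gradNormRpow_gradient (hv : IsPositiveCriticalPoint Ω V p v)
    (hΩ : IsOpen Ω) (hp : 1 < p) (hφ : IsC1TestFun Ω φ) :
    Integrable fun x ↦ ⟪gradNormRpow p (gradient v x), gradient φ x⟫ :=
  hφ.integrable_inner_gradient
    ((continuous_gradNormRpow hp).comp_continuousOn (hv.continuousOn_gradient hΩ))

lemma integrable_bregman (hv : IsPositiveCriticalPoint Ω V p v) (hΩ : IsOpen Ω) (hp : 1 < p)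
    (hr : IsC1TestFun Ω r) :
    Integrable fun x ↦ bregman p (gradient (fun y ↦ r y * v y) x) (r x • gradient v x) := by
  have hinner := hv.integrable_inner_gradNormRpow_gradient hΩ hp
    ((hr.abs_rpow hp).mul_contDiffOn hΩ hv.contDiffOn)
  have hnorm := (hr.mul_contDiffOn hΩ hv.contDiffOn).integrable_norm_gradient_rpow (p := p)
    (by linarith)
  refine (hnorm.sub (hinner.const_mul p⁻¹)).congr (ae_of_all _ fun x ↦ ?_)
  exact sub_eq_of_eq_add (hv.norm_gradient_mul_rpow_eq hΩ hp hr x)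

theorem energyQ_mul_eq_integral_bregman (hv : IsPositiveCriticalPoint Ω V p v) (hΩ : IsOpen Ω)
    (hp : 1 < p) (hV : LocBddPotential Ω V) (hr : IsC1TestFun Ω r) :
    energyQ Ω V p (fun x ↦ r x * v x) =
      ∫ x, bregman p (gradient (fun y ↦ r y * v y) x) (r x • gradient v x) := by
  have hφ := (hr.abs_rpow hp).mul_contDiffOn hΩ hv.contDiffOn
  have hinner := hv.integrable_inner_gradNormRpow_gradient hΩ hp hφ
  rw [(hr.mul_contDiffOn hΩ hv.contDiffOn).energyQ_eq (by linarith) hV,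
    integral_congr_ae (ae_of_all _ (hv.norm_gradient_mul_rpow_eq hΩ hp hr)),
    integral_add (hv.integrable_bregman hΩ hp hr) (hinner.const_mul _), integral_const_mul]
  have hpot : ∀ x, V x * |r x * v x| ^ p =
      p⁻¹ * (V x * ⟪gradNormRpow p (v x), |r x| ^ p * v x⟫) := fun x ↦ by
    rw [abs_mul_rpow_eq_inner_gradNormRpow hp, mul_left_comm]
  simp only [hpot, integral_const_mul]
  linear_combination p⁻¹ * hv.firstVariation_eq_zero _ hφ

lemma exists_norm_gradient_rpow_le (hv : IsPositiveCriticalPoint Ω V p v) (hΩ : IsOpen Ω)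
    (hp : 1 < p) (hK : IsCompact K) (hKΩ : K ⊆ Ω) {δ : ℝ} (hδ : 0 < δ) :
    ∃ C ≥ 0, ∀ {r}, ∀ x ∈ K, DifferentiableAt ℝ r x → ‖gradient r x‖ ^ p ≤
      C * bregman p (gradient (fun y ↦ r y * v y) x) (r x • gradient v x) + δ * |r x| ^ p := by
  have hp₀ : 0 ≤ p := by linarith
  obtain ⟨m, hm, hmv⟩ : ∃ m > 0, ∀ x ∈ K, m ≤ v x :=
    hK.exists_forall_le' (hv.contDiffOn.continuousOn.mono hKΩ) fun x hx ↦ hv.pos x (hKΩ hx)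
  obtain ⟨M, hM⟩ := hK.exists_bound_of_continuousOn ((hv.continuousOn_gradient hΩ).mono hKΩ)
  have hδ' : 0 < δ * m ^ p / (|M| ^ p + 1) := by positivity
  obtain ⟨C, hC, hbreg⟩ := exists_norm_sub_rpow_le_bregman_add (H := Euc d) hp hδ'
  refine ⟨C / m ^ p, by positivity, fun {r} x hx hr ↦ ?_⟩
  have hgrad : gradient (fun y ↦ r y * v y) x - r x • gradient v x = v x • gradient r x := by
    rw [gradient_fun_mul hr ((hv.contDiffOn.differentiableOn one_ne_zero).differentiableAt
      (hΩ.mem_nhds (hKΩ hx))), add_sub_cancel_left]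
  have hvM : ‖gradient v x‖ ^ p ≤ |M| ^ p + 1 :=
    (Real.rpow_le_rpow (norm_nonneg _) ((hM x hx).trans (le_abs_self M)) hp₀).trans (by linarith)
  set B := bregman p (gradient (fun y ↦ r y * v y) x) (r x • gradient v x)
  have hle : m ^ p * ‖gradient r x‖ ^ p ≤ C * B + δ * m ^ p * |r x| ^ p := calc
    m ^ p * ‖gradient r x‖ ^ p ≤ ‖v x • gradient r x‖ ^ p := by
        rw [norm_smul, Real.mul_rpow (norm_nonneg _) (norm_nonneg _)]
        gcongr
        exact (hmv x hx).trans (le_abs_self _)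
    _ ≤ C * B + δ * m ^ p / (|M| ^ p + 1) * ‖r x • gradient v x‖ ^ p := by
        rw [← hgrad]
        exact hbreg _ _
    _ ≤ C * B + δ * m ^ p / (|M| ^ p + 1) * (|r x| ^ p * (|M| ^ p + 1)) := by
        rw [norm_smul, Real.mul_rpow (norm_nonneg _) (norm_nonneg _), Real.norm_eq_abs]
        gcongr
    _ = _ := by field_simp
  calc ‖gradient r x‖ ^ p ≤ (C * B + δ * m ^ p * |r x| ^ p) / m ^ p := by
        rwa [le_div_iff₀' (by positivity)]
    _ = _ := by field_simp

theorem exists_setIntegral_norm_gradient_rpow_le (hv : IsPositiveCriticalPoint Ω V p v)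
    (hΩ : IsOpen Ω) (hp : 1 < p) (hV : LocBddPotential Ω V) (hK : IsCompact K) (hKΩ : K ⊆ Ω)
    {δ : ℝ} (hδ : 0 < δ) :
    ∃ C ≥ 0, ∀ r, IsC1TestFun Ω r → ∫ x in K, ‖gradient r x‖ ^ p ≤
      C * energyQ Ω V p (fun x ↦ r x * v x) + δ * ∫ x in K, |r x| ^ p := by
  obtain ⟨C, hC, hpt⟩ := hv.exists_norm_gradient_rpow_le hΩ hp hK hKΩ hδ
  refine ⟨C, hC, fun r hr ↦ ?_⟩
  have hbreg := hv.integrable_bregman hΩ hp hr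
  have hgrad : IntegrableOn (fun x ↦ ‖gradient r x‖ ^ p) K :=
    (hr.integrable_norm_gradient_rpow (by linarith)).integrableOn
  have hrp : IntegrableOn (fun x ↦ |r x| ^ p) K := by
    simpa using integrableOn_norm_rpow (by linarith) hK hr.continuous.continuousOn
  calc ∫ x in K, ‖gradient r x‖ ^ p
      ≤ ∫ x in K, (C * bregman p (gradient (fun y ↦ r y * v y) x) (r x • gradient v x) +
          δ * |r x| ^ p) :=
        setIntegral_mono_on hgrad ((hbreg.integrableOn.const_mul C).add (hrp.const_mul δ))
          hK.measurableSet fun x hx ↦ hpt x hx (hr.differentiableAt x)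
    _ = C * (∫ x in K, bregman p (gradient (fun y ↦ r y * v y) x) (r x • gradient v x)) +
          δ * ∫ x in K, |r x| ^ p := by
        rw [integral_add (hbreg.integrableOn.const_mul C) (hrp.const_mul δ), integral_const_mul,
          integral_const_mul]
    _ ≤ _ := by
        rw [hv.energyQ_mul_eq_integral_bregman hΩ hp hV hr]
        gcongr ?_ + _
        refine mul_le_mul_of_nonneg_left ?_ hC
        exact setIntegral_le_integral hbreg (ae_of_all _ fun x ↦ bregman_nonneg hp _ _)

end IsPositiveCriticalPoint

end Picone

section Poincare

open scoped ENNReal NNReal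

lemma lintegral_enorm_rpow_le {α G : Type*} [MeasurableSpace α] [NormedAddCommGroup G]
    {μ : Measure α} [IsProbabilityMeasure μ] {p : ℝ} (hp : 1 ≤ p) {f : α → G}
    (hf : AEStronglyMeasurable f μ) : (∫⁻ a, ‖f a‖ₑ ∂μ) ^ p ≤ ∫⁻ a, ‖f a‖ₑ ^ p ∂μ := by
  have h := eLpNorm'_le_eLpNorm'_of_exponent_le one_pos hp μ hf
  simp only [eLpNorm', ENNReal.rpow_one, div_one] at h
  rwa [← ENNReal.rpow_le_rpow_iff (one_div_pos.2 (one_pos.trans_le hp)), ← ENNReal.rpow_mul,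
    mul_one_div_cancel (one_pos.trans_le hp).ne', ENNReal.rpow_one]

section Segment

variable {E F : Type*} [NormedAddCommGroup E] [NormedSpace ℝ E] [NormedAddCommGroup F]
  [NormedSpace ℝ F] [CompleteSpace F] {g : E → F} {p : ℝ}

lemma integral_fderiv_segment (hg : ContDiff ℝ 1 g) (x y : E) :
    ∫ t in Set.Icc (0 : ℝ) 1, fderiv ℝ g (y + t • (x - y)) (x - y) = g x - g y := by
  have hγ (t : ℝ) : HasDerivAt (fun s : ℝ ↦ y + s • (x - y)) (x - y) t := by
    simpa using ((hasDerivAt_id t).smul_const (x - y)).const_add y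
  have hg' : Continuous fun t : ℝ ↦ fderiv ℝ g (y + t • (x - y)) (x - y) :=
    ((hg.continuous_fderiv one_ne_zero).comp (by fun_prop)).clm_apply continuous_const
  have hderiv (t : ℝ) := (hg.differentiable one_ne_zero _).hasFDerivAt.comp_hasDerivAt t (hγ t)
  rw [integral_Icc_eq_integral_Ioc, ← intervalIntegral.integral_of_le zero_le_one,
    intervalIntegral.integral_eq_sub_of_hasDerivAt (fun t _ ↦ hderiv t)
      (hg'.intervalIntegrable _ _)]
  simp

lemma enorm_sub_rpow_le_lintegral_segment (hp : 1 ≤ p) (hg : ContDiff ℝ 1 g) (x y : E) :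
    ‖g x - g y‖ₑ ^ p ≤
      ‖x - y‖ₑ ^ p * ∫⁻ t in Set.Icc (0 : ℝ) 1, ‖fderiv ℝ g (y + t • (x - y))‖ₑ ^ p := by
  have : IsProbabilityMeasure (volume.restrict (Set.Icc (0 : ℝ) 1)) := ⟨by simp⟩
  have hp0 : 0 ≤ p := zero_le_one.trans hp
  have hg' : Continuous fun t : ℝ ↦ fderiv ℝ g (y + t • (x - y)) :=
    (hg.continuous_fderiv one_ne_zero).comp (by fun_prop)
  calc ‖g x - g y‖ₑ ^ p
      ≤ (∫⁻ t in Set.Icc (0 : ℝ) 1, ‖x - y‖ₑ * ‖fderiv ℝ g (y + t • (x - y))‖ₑ) ^ p := by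
        rw [← integral_fderiv_segment hg]
        gcongr
        refine (enorm_integral_le_lintegral_enorm _).trans (lintegral_mono fun t ↦ ?_)
        rw [mul_comm]
        exact ContinuousLinearMap.le_opENorm _ _
    _ ≤ _ := by
        rw [lintegral_const_mul' _ _ enorm_ne_top, ENNReal.mul_rpow_of_nonneg _ _ hp0]
        gcongr
        exact lintegral_enorm_rpow_le hp hg'.aestronglyMeasurable

end Segment

section Haar

variable {E : Type*} [NormedAddCommGroup E] [NormedSpace ℝ E] [FiniteDimensional ℝ E]
  [MeasurableSpace E] [BorelSpace E] {μ : Measure E} [μ.IsAddHaarMeasure] {p : ℝ}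

lemma lintegral_comp_smul_add_le {Φ : E → ℝ≥0∞} (hΦ : Measurable Φ) {t : ℝ} (ht : 1 / 2 ≤ t)
    (y : E) : ∫⁻ x, Φ (t • x + y) ∂μ ≤ 2 ^ Module.finrank ℝ E * ∫⁻ x, Φ x ∂μ := by
  have ht0 : 0 < t := one_half_pos.trans_le ht
  have hle : ENNReal.ofReal |(t ^ Module.finrank ℝ E)⁻¹| ≤ 2 ^ Module.finrank ℝ E := by
    rw [abs_of_pos (by positivity), ← inv_pow, ENNReal.ofReal_pow (by positivity)]
    gcongr
    rw [ENNReal.ofReal_le_ofNat, inv_le_comm₀ ht0 two_pos]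
    simpa using ht
  rw [← lintegral_map (f := fun z ↦ Φ (z + y)) (by fun_prop) (measurable_const_smul t),
    Measure.map_addHaar_smul _ ht0.ne', lintegral_smul_measure, lintegral_add_right_eq_self]
  exact mul_le_mul_left hle _

-- The inner integral is taken in the variable multiplied by the larger of `t` and `1 - t`.
lemma lintegral_lintegral_segment_le {Φ : E → ℝ≥0∞} (hΦ : Measurable Φ) (U : Set E) (t : ℝ) :
    ∫⁻ x in U, ∫⁻ y in U, Φ (y + t • (x - y)) ∂μ ∂μ ≤
      2 ^ Module.finrank ℝ E * (∫⁻ x, Φ x ∂μ) * μ U := by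
  rcases le_total (1 / 2) t with ht | ht
  · rw [lintegral_lintegral_swap (by fun_prop), ← setLIntegral_const]
    refine lintegral_mono fun y ↦ (setLIntegral_le_lintegral _ _).trans ?_
    have hcomb (x : E) : y + t • (x - y) = t • x + (1 - t) • y := by module
    simpa only [hcomb] using lintegral_comp_smul_add_le hΦ ht ((1 - t) • y)
  · rw [← setLIntegral_const]
    refine lintegral_mono fun x ↦ (setLIntegral_le_lintegral _ _).trans ?_
    have hcomb (y : E) : y + t • (x - y) = (1 - t) • y + t • x := by module
    simpa only [hcomb] using lintegral_comp_smul_add_le hΦ (by linarith) (t • x)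

lemma lintegral_lintegral_lintegral_segment_le {Φ : E → ℝ≥0∞} (hΦ : Measurable Φ) (U : Set E) :
    ∫⁻ x in U, ∫⁻ y in U, (∫⁻ t in Set.Icc (0 : ℝ) 1, Φ (y + t • (x - y))) ∂μ ∂μ ≤
      2 ^ Module.finrank ℝ E * (∫⁻ x, Φ x ∂μ) * μ U := by
  have hΦ₁ : Measurable fun q : (ℝ × E) × E ↦ Φ (q.2 + q.1.1 • (q.1.2 - q.2)) := by fun_prop
  calc ∫⁻ x in U, ∫⁻ y in U, (∫⁻ t in Set.Icc (0 : ℝ) 1, Φ (y + t • (x - y))) ∂μ ∂μ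
      = ∫⁻ x in U, (∫⁻ t in Set.Icc (0 : ℝ) 1, ∫⁻ y in U, Φ (y + t • (x - y)) ∂μ) ∂μ :=
        lintegral_congr fun x ↦ lintegral_lintegral_swap (by fun_prop)
    _ = ∫⁻ t in Set.Icc (0 : ℝ) 1, ∫⁻ x in U, ∫⁻ y in U, Φ (y + t • (x - y)) ∂μ ∂μ :=
        (lintegral_lintegral_swap (f := fun t x ↦ ∫⁻ y in U, Φ (y + t • (x - y)) ∂μ)
          hΦ₁.lintegral_prod_right'.aemeasurable).symm
    _ ≤ ∫⁻ _ in Set.Icc (0 : ℝ) 1, 2 ^ Module.finrank ℝ E * (∫⁻ x, Φ x ∂μ) * μ U :=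
        lintegral_mono fun t ↦ lintegral_lintegral_segment_le hΦ U t
    _ = _ := by simp

variable {F : Type*} [NormedAddCommGroup F] [NormedSpace ℝ F] [CompleteSpace F] {U K : Set E}
  {g : E → F}

lemma lintegral_lintegral_enorm_sub_rpow_le (hp : 1 ≤ p) (hU : Convex ℝ U) (hUm : MeasurableSet U)
    (hUb : Bornology.IsBounded U) (hg : ContDiff ℝ 1 g) :
    ∫⁻ x in U, ∫⁻ y in U, ‖g x - g y‖ₑ ^ p ∂μ ∂μ ≤
      Metric.ediam U ^ p *
        (2 ^ Module.finrank ℝ E * (∫⁻ x in U, ‖fderiv ℝ g x‖ₑ ^ p ∂μ) * μ U) := by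
  set Φ : E → ℝ≥0∞ := U.indicator fun z ↦ ‖fderiv ℝ g z‖ₑ ^ p
  have hΦ : Measurable Φ :=
    ((hg.continuous_fderiv one_ne_zero).enorm.measurable.pow_const p).indicator hUm
  rw [← lintegral_indicator hUm fun z ↦ ‖fderiv ℝ g z‖ₑ ^ p]
  refine le_trans ?_
    (mul_le_mul_right (lintegral_lintegral_lintegral_segment_le (μ := μ) hΦ U) _)
  have hsegment (x) (hx : x ∈ U) (y) (hy : y ∈ U) : ‖g x - g y‖ₑ ^ p ≤
      Metric.ediam U ^ p * ∫⁻ t in Set.Icc (0 : ℝ) 1, Φ (y + t • (x - y)) := by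
    refine (enorm_sub_rpow_le_lintegral_segment hp hg x y).trans (mul_le_mul' ?_ ?_)
    · rw [← edist_eq_enorm_sub]
      gcongr
      exact Metric.edist_le_ediam_of_mem hx hy
    · refine (setLIntegral_congr_fun measurableSet_Icc fun t ht ↦ ?_).le
      exact (Set.indicator_of_mem (hU.add_smul_sub_mem hy hx ht) fun z ↦ ‖fderiv ℝ g z‖ₑ ^ p).symm
  have hdiam : Metric.ediam U ^ p ≠ ∞ :=
    ENNReal.rpow_ne_top_of_nonneg (zero_le_one.trans hp) hUb.ediam_ne_top
  rw [← lintegral_const_mul' _ _ hdiam]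
  refine setLIntegral_mono' hUm fun x hx ↦ ?_
  rw [← lintegral_const_mul' _ _ hdiam]
  exact setLIntegral_mono' hUm fun y hy ↦ hsegment x hx y hy

theorem exists_setLIntegral_enorm_sub_rpow_le (hp : 1 ≤ p) (hU : Convex ℝ U)
    (hUm : MeasurableSet U) (hUb : Bornology.IsBounded U) (hU₀ : μ U ≠ 0) (hg : ContDiff ℝ 1 g) :
    ∃ c : F, ∫⁻ x in U, ‖g x - c‖ₑ ^ p ∂μ ≤
      Metric.ediam U ^ p * 2 ^ Module.finrank ℝ E * ∫⁻ x in U, ‖fderiv ℝ g x‖ₑ ^ p ∂μ := by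
  have hmeas : Measurable fun q : E × E ↦ ‖g q.1 - g q.2‖ₑ ^ p :=
    (continuous_enorm.comp ((hg.continuous.comp continuous_fst).sub
      (hg.continuous.comp continuous_snd))).measurable.pow_const p
  obtain ⟨y, -, hy⟩ := exists_le_setLAverage (f := fun x ↦ ∫⁻ y in U, ‖g x - g y‖ₑ ^ p ∂μ) hU₀
    hUb.measure_lt_top.ne hmeas.lintegral_prod_right'.aemeasurable
  refine ⟨g y, ?_⟩
  simp_rw [enorm_sub_rev _ (g y)]
  refine hy.trans ?_
  rw [setLAverage_eq]
  refine ENNReal.div_le_of_le_mul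
    ((lintegral_lintegral_enorm_sub_rpow_le hp hU hUm hUb hg).trans_eq (by ring))

theorem exists_setIntegral_norm_sub_rpow_le (hp : 1 ≤ p) (hK : IsCompact K) (hKc : Convex ℝ K)
    (hK₀ : μ K ≠ 0) : ∃ C : ℝ, 0 ≤ C ∧ ∀ g : E → F, ContDiff ℝ 1 g →
      ∃ c : F, ∫ x in K, ‖g x - c‖ ^ p ∂μ ≤ C * ∫ x in K, ‖fderiv ℝ g x‖ ^ p ∂μ := by
  have hp0 : 0 ≤ p := zero_le_one.trans hp
  have hdiam : Metric.ediam K ^ p * 2 ^ Module.finrank ℝ E ≠ ∞ := by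
    have := hK.isBounded.ediam_ne_top
    finiteness
  refine ⟨(Metric.ediam K ^ p * 2 ^ Module.finrank ℝ E).toReal, ENNReal.toReal_nonneg,
    fun g hg ↦ ?_⟩
  obtain ⟨c, hc⟩ :=
    exists_setLIntegral_enorm_sub_rpow_le hp hKc hK.measurableSet hK.isBounded hK₀ hg
  have hgc : Continuous fun x ↦ g x - c := hg.continuous.sub continuous_const
  refine ⟨c, ?_⟩
  rwa [← ofReal_setIntegral_norm_rpow hp0 hK hgc.continuousOn,
    ← ofReal_setIntegral_norm_rpow hp0 hK (hg.continuous_fderiv one_ne_zero).continuousOn,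
    ← ENNReal.ofReal_toReal hdiam, ← ENNReal.ofReal_mul ENNReal.toReal_nonneg,
    ENNReal.ofReal_le_ofReal_iff (by positivity)] at hc

theorem exists_setIntegral_norm_rpow_le (hp : 1 ≤ p) (hK : IsCompact K) (hKc : Convex ℝ K)
    {A : Set E} (hAK : A ⊆ K) (hA₀ : μ A ≠ 0) : ∃ C : ℝ, 0 ≤ C ∧ ∀ g : E → F, ContDiff ℝ 1 g →
      ∫ x in K, ‖g x‖ ^ p ∂μ ≤
        C * (∫ x in K, ‖fderiv ℝ g x‖ ^ p ∂μ + ∫ x in A, ‖g x‖ ^ p ∂μ) := by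
  have hp0 : 0 ≤ p := zero_le_one.trans hp
  obtain ⟨C, hC, hPoincare⟩ := exists_setIntegral_norm_sub_rpow_le (F := F) hp hK hKc
    fun h ↦ hA₀ (measure_mono_null hAK h)
  have hA_top : μ A ≠ ∞ := ((measure_mono hAK).trans_lt hK.measure_lt_top).ne
  have hA : 0 < μ.real A := ENNReal.toReal_pos hA₀ hA_top
  set M : ℝ := 2 ^ (p - 1)
  refine ⟨M * C + M * (M * (C + 1) / μ.real A) * μ.real K, by positivity, fun g hg ↦ ?_⟩
  obtain ⟨c, hc⟩ := hPoincare g hg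
  set G := ∫ x in K, ‖fderiv ℝ g x‖ ^ p ∂μ
  set N := ∫ x in K, ‖g x - c‖ ^ p ∂μ
  set R := ∫ x in A, ‖g x‖ ^ p ∂μ
  have hG : 0 ≤ G := by positivity
  have hR : 0 ≤ R := by positivity
  have hgK : IntegrableOn (fun x ↦ ‖g x‖ ^ p) K μ :=
    integrableOn_norm_rpow hp0 hK hg.continuous.continuousOn
  have hgc : IntegrableOn (fun x ↦ ‖g x - c‖ ^ p) K μ :=
    integrableOn_norm_rpow hp0 hK (hg.continuous.sub continuous_const).continuousOn
  have hcA : ‖c‖ ^ p * μ.real A ≤ M * (N + R) := by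
    refine (norm_rpow_mul_measureReal_le hp (hgK.mono_set hAK) (hgc.mono_set hAK)).trans ?_
    gcongr
    exact setIntegral_mono_set hgc (ae_of_all _ fun x ↦ by positivity) hAK.eventuallyLE
  calc ∫ x in K, ‖g x‖ ^ p ∂μ ≤ M * (N + ‖c‖ ^ p * μ.real K) :=
        setIntegral_norm_rpow_le_of_norm_sub hp hK.measure_ne_top hgc
    _ ≤ M * (C * (G + R) + M * ((C + 1) * (G + R)) / μ.real A * μ.real K) := by
        gcongr
        · exact hc.trans (by gcongr; linarith)
        · rw [le_div_iff₀ hA]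
          refine hcA.trans ?_
          gcongr
          nlinarith
    _ = _ := by ring

end Haar

end Poincare

section Chaining

variable {d : ℕ} {Ω K A B : Set (Euc d)} {V v : Euc d → ℝ} {p : ℝ} {c : (Euc d → ℝ) → ℝ}

theorem IsPositiveCriticalPoint.exists_setIntegral_abs_sub_rpow_le_of_gradient
    (hv : IsPositiveCriticalPoint Ω V p v) (hΩ : IsOpen Ω) (hp : 1 < p) (hV : LocBddPotential Ω V)
    (hK : IsCompact K) (hKΩ : K ⊆ Ω) {P : ℝ} (hP : 0 ≤ P) {ε : ℝ} (hε : 0 < ε) :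
    ∃ C ≥ 0, ∀ r, IsC1TestFun Ω r → ∀ c R : ℝ,
      ∫ x in K, |r x - c| ^ p ≤ P * ((∫ x in K, ‖gradient r x‖ ^ p) + R) →
      ∫ x in K, |r x - c| ^ p ≤
        ε * |c| ^ p + C * energyQ Ω V p (fun x ↦ r x * v x) + 2 * P * R := by
  set M : ℝ := 2 ^ (p - 1)
  set κ := volume.real K
  obtain ⟨δ, hδ, hδM, hδκ⟩ : ∃ δ > 0, P * M * δ ≤ 1 / 2 ∧ P * M * κ * δ ≤ ε / 2 := by
    obtain ⟨δ₁, hδ₁, h₁⟩ := exists_pos_mul_lt one_half_pos (P * M)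
    obtain ⟨δ₂, hδ₂, h₂⟩ := exists_pos_mul_lt (half_pos hε) (P * M * κ)
    refine ⟨min δ₁ δ₂, lt_min hδ₁ hδ₂, h₁.le.trans' ?_, h₂.le.trans' ?_⟩
    · gcongr; exact min_le_left _ _
    · gcongr; exact min_le_right _ _
  obtain ⟨C, hC, hgradient⟩ := hv.exists_setIntegral_norm_gradient_rpow_le hΩ hp hV hK hKΩ hδ
  refine ⟨2 * P * C, by positivity, fun r hr c R hR ↦ ?_⟩
  have hrc : IntegrableOn (fun x ↦ ‖r x - c‖ ^ p) K :=
    integrableOn_norm_rpow (by linarith) hK (hr.continuous.sub continuous_const).continuousOn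
  have hrK := setIntegral_norm_rpow_le_of_norm_sub hp.le hK.measure_ne_top hrc
  simp only [Real.norm_eq_abs] at hrK
  set N := ∫ x in K, |r x - c| ^ p
  have habsorb : N ≤ 1 / 2 * N + ε / 2 * |c| ^ p +
      P * (C * energyQ Ω V p (fun x ↦ r x * v x) + R) :=
    calc N ≤ P * (C * energyQ Ω V p (fun x ↦ r x * v x) + δ * (M * (N + |c| ^ p * κ)) + R) := by
          refine hR.trans ?_
          gcongr
          refine (hgradient r hr).trans ?_
          gcongr
      _ = (P * M * δ) * N + (P * M * κ * δ) * |c| ^ p +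
          P * (C * energyQ Ω V p (fun x ↦ r x * v x) + R) := by ring
      _ ≤ _ := by gcongr
  linarith

/-- `A` is *controlled* if, for the quotients `r = w / v` of test functions `w` by `v`, the
distance in `L^p(A)` from `r` to the constant `c r` is bounded by the energy `Q_V(w)`, up to an
arbitrarily small multiple of `|c r|`. Controlled sets propagate along chains of overlapping balls.
-/
def IsControlled (Ω : Set (Euc d)) (V : Euc d → ℝ) (p : ℝ) (v : Euc d → ℝ)
    (c : (Euc d → ℝ) → ℝ) (A : Set (Euc d)) : Prop :=
  Bornology.IsBounded A ∧ ∀ ε > 0, ∃ C ≥ 0, ∀ r, IsC1TestFun Ω r →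
    ∫ x in A, |r x - c r| ^ p ≤ ε * |c r| ^ p + C * energyQ Ω V p (fun x ↦ r x * v x)

lemma IsC1TestFun.integrableOn_abs_sub_rpow {r : Euc d → ℝ} (hr : IsC1TestFun Ω r) (hp : 0 ≤ p)
    (hA : Bornology.IsBounded A) (a : ℝ) : IntegrableOn (fun x ↦ |r x - a| ^ p) A := by
  have := integrableOn_norm_rpow (μ := volume) hp hA.isCompact_closure
    (hr.continuous.sub (continuous_const (y := a))).continuousOn
  exact this.mono_set subset_closure

namespace IsControlled

lemma empty : IsControlled Ω V p v c ∅ :=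
  ⟨Bornology.isBounded_empty, fun ε hε ↦ ⟨0, le_rfl, fun r _ ↦ by
    rw [setIntegral_empty, zero_mul, add_zero]
    positivity⟩⟩

lemma mono (hp : 0 ≤ p) (hB : IsControlled Ω V p v c B) (hAB : A ⊆ B) :
    IsControlled Ω V p v c A := by
  refine ⟨hB.1.subset hAB, fun ε hε ↦ ?_⟩
  obtain ⟨C, hC, hCB⟩ := hB.2 ε hε
  exact ⟨C, hC, fun r hr ↦ (setIntegral_mono_set (hr.integrableOn_abs_sub_rpow hp hB.1 _)
    (ae_of_all _ fun x ↦ by positivity) hAB.eventuallyLE).trans (hCB r hr)⟩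

lemma union (hp : 0 ≤ p) (hA : IsControlled Ω V p v c A) (hB : IsControlled Ω V p v c B) :
    IsControlled Ω V p v c (A ∪ B) := by
  refine ⟨hA.1.union hB.1, fun ε hε ↦ ?_⟩
  obtain ⟨C, hC, hCA⟩ := hA.2 (ε / 2) (half_pos hε)
  obtain ⟨C', hC', hCB⟩ := hB.2 (ε / 2) (half_pos hε)
  refine ⟨C + C', by positivity, fun r hr ↦ ?_⟩
  have hrA := hr.integrableOn_abs_sub_rpow hp hA.1 (c r)
  have hrB := hr.integrableOn_abs_sub_rpow hp hB.1 (c r)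
  calc ∫ x in A ∪ B, |r x - c r| ^ p
      ≤ (∫ x in A, |r x - c r| ^ p) + ∫ x in B, |r x - c r| ^ p := by
        rw [← integral_add_measure hrA hrB]
        exact integral_mono_measure (Measure.restrict_union_le A B)
          (ae_of_all _ fun x ↦ by positivity) (Integrable.add_measure hrA hrB)
    _ ≤ _ := by linarith [hCA r hr, hCB r hr]

lemma of_isCompact (hp : 0 ≤ p) (hK : IsCompact K)
    (h : ∀ x ∈ K, ∃ A ∈ 𝓝 x, IsControlled Ω V p v c A) : IsControlled Ω V p v c K :=
  hK.induction_on empty (fun _ _ hst ht ↦ ht.mono hp hst) (fun _ _ ↦ union hp) fun x hx ↦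
    (h x hx).imp fun _ hA ↦ ⟨mem_nhdsWithin_of_mem_nhds hA.1, hA.2⟩

lemma of_subset_convex (hv : IsPositiveCriticalPoint Ω V p v) (hΩ : IsOpen Ω) (hp : 1 < p)
    (hV : LocBddPotential Ω V) (hK : IsCompact K) (hKc : Convex ℝ K) (hKΩ : K ⊆ Ω)
    (hA : IsControlled Ω V p v c A) (hAK : A ⊆ K) (hA₀ : volume A ≠ 0) :
    IsControlled Ω V p v c K := by
  refine ⟨hK.isBounded, fun ε hε ↦ ?_⟩
  obtain ⟨P, hP, hPoincare⟩ :=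
    exists_setIntegral_norm_rpow_le (F := ℝ) (μ := volume) hp.le hK hKc hAK hA₀
  obtain ⟨C, hC, habsorb⟩ :=
    hv.exists_setIntegral_abs_sub_rpow_le_of_gradient hΩ hp hV hK hKΩ hP (half_pos hε)
  obtain ⟨η, hη, hPη⟩ := exists_pos_mul_lt (half_pos hε) (2 * P)
  obtain ⟨C', hC', hCA⟩ := hA.2 η hη
  refine ⟨C + 2 * P * C', by positivity, fun r hr ↦ ?_⟩
  have hgradient := hPoincare (fun x ↦ r x - c r) (hr.contDiff.sub contDiff_const)
  simp only [fderiv_sub_const, ← norm_gradient, Real.norm_eq_abs] at hgradient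
  calc ∫ x in K, |r x - c r| ^ p
      ≤ ε / 2 * |c r| ^ p + C * energyQ Ω V p (fun x ↦ r x * v x) +
          2 * P * (η * |c r| ^ p + C' * energyQ Ω V p (fun x ↦ r x * v x)) := by
        refine (habsorb r hr _ _ hgradient).trans ?_
        gcongr
        exact hCA r hr
    _ = ε / 2 * |c r| ^ p + (2 * P * η) * |c r| ^ p +
          (C + 2 * P * C') * energyQ Ω V p (fun x ↦ r x * v x) := by ring
    _ ≤ ε / 2 * |c r| ^ p + ε / 2 * |c r| ^ p +
          (C + 2 * P * C') * energyQ Ω V p (fun x ↦ r x * v x) := by gcongr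
    _ = _ := by ring

lemma exists_of_convex (hv : IsPositiveCriticalPoint Ω V p v) (hΩ : IsOpen Ω) (hp : 1 < p)
    (hV : LocBddPotential Ω V) (hK : IsCompact K) (hKc : Convex ℝ K) (hKΩ : K ⊆ Ω)
    (hK₀ : volume K ≠ 0) : ∃ c, IsControlled Ω V p v c K := by
  obtain ⟨P, hP, hPoincare⟩ :=
    exists_setIntegral_norm_sub_rpow_le (F := ℝ) (μ := volume) hp.le hK hKc hK₀
  have hcenter (r : Euc d → ℝ) : ∃ a : ℝ, IsC1TestFun Ω r →
      ∫ x in K, |r x - a| ^ p ≤ P * ((∫ x in K, ‖gradient r x‖ ^ p) + 0) := by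
    by_cases hr : IsC1TestFun Ω r
    · simpa [hr, norm_gradient] using hPoincare r hr.contDiff
    · exact ⟨0, fun h ↦ absurd h hr⟩
  choose c hc using hcenter
  refine ⟨c, hK.isBounded, fun ε hε ↦ ?_⟩
  obtain ⟨C, hC, habsorb⟩ :=
    hv.exists_setIntegral_abs_sub_rpow_le_of_gradient hΩ hp hV hK hKΩ hP hε
  exact ⟨C, hC, fun r hr ↦ by simpa using habsorb r hr _ _ (hc r hr)⟩

end IsControlled

theorem IsPositiveCriticalPoint.exists_forall_isControlled (hv : IsPositiveCriticalPoint Ω V p v)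
    (hΩ : IsOpen Ω) (hΩc : IsConnected Ω) (hp : 1 < p) (hV : LocBddPotential Ω V) :
    ∃ c, ∀ K, IsCompact K → K ⊆ Ω → IsControlled Ω V p v c K := by
  have hp0 : 0 ≤ p := by linarith
  have hball (x) (hx : x ∈ Ω) : ∃ ρ > 0, Metric.closedBall x ρ ⊆ Ω :=
    Metric.nhds_basis_closedBall.mem_iff.1 (hΩ.mem_nhds hx)
  obtain ⟨x₀, hx₀⟩ := hΩc.nonempty
  obtain ⟨ρ₀, hρ₀, hρ₀Ω⟩ := hball x₀ hx₀
  obtain ⟨c, hc⟩ := IsControlled.exists_of_convex hv hΩ hp hV (isCompact_closedBall x₀ ρ₀)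
    (convex_closedBall x₀ ρ₀) hρ₀Ω (Metric.measure_closedBall_pos volume x₀ hρ₀).ne'
  set U : Set (Euc d) := {x | ∃ A ∈ 𝓝 x, IsControlled Ω V p v c A}
  suffices hU : Ω ⊆ U from ⟨c, fun K hK hKΩ ↦ .of_isCompact hp0 hK fun x hx ↦ hU (hKΩ hx)⟩
  refine hΩc.isPreconnected.subset_of_closure_inter_subset ?_
    ⟨x₀, hx₀, _, Metric.closedBall_mem_nhds x₀ hρ₀, hc⟩ ?_
  · refine isOpen_iff_mem_nhds.2 fun x ⟨A, hA, hAc⟩ ↦ ?_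
    exact (eventually_mem_nhds_iff.2 hA).mono fun y hy ↦ ⟨A, hy, hAc⟩
  · rintro x ⟨hxU, hxΩ⟩
    obtain ⟨ρ, hρ, hρΩ⟩ := hball x hxΩ
    obtain ⟨y, hyx, A, hA, hAc⟩ := mem_closure_iff_nhds.1 hxU _ (Metric.ball_mem_nhds x hρ)
    have hAρ : A ∩ Metric.closedBall x ρ ∈ 𝓝 y :=
      inter_mem hA (Metric.closedBall_mem_nhds_of_mem hyx)
    exact ⟨_, Metric.closedBall_mem_nhds x hρ,
      .of_subset_convex hv hΩ hp hV (isCompact_closedBall x ρ) (convex_closedBall x ρ) hρΩ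
        (hAc.mono hp0 Set.inter_subset_left) Set.inter_subset_right
        (Measure.measure_pos_of_mem_nhds volume hAρ).ne'⟩

end Chaining

section Weights

lemma integral_tsum_mul_le {α ι : Type*} [Countable ι] [MeasurableSpace α] {μ : Measure α}
    {q : ι → ℝ} (hq : ∀ i, 0 ≤ q i) (hq₁ : HasSum q 1) {ψ : ι → α → ℝ}
    (hψ : ∀ i, Integrable (ψ i) μ) (hψ₀ : ∀ i x, 0 ≤ ψ i x) {B : ℝ} (hB : ∀ i, ∫ x, ψ i x ∂μ ≤ B) :
    ∫ x, ∑' i, q i * ψ i x ∂μ ≤ B := by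
  have hnorm (i) : ∫ x, ‖q i * ψ i x‖ ∂μ = q i * ∫ x, ψ i x ∂μ := by
    simp only [Real.norm_of_nonneg (mul_nonneg (hq i) (hψ₀ i _)), integral_const_mul]
  have hle (i) : q i * ∫ x, ψ i x ∂μ ≤ q i * B := mul_le_mul_of_nonneg_left (hB i) (hq i)
  have hsum : Summable fun i ↦ q i * ∫ x, ψ i x ∂μ :=
    .of_nonneg_of_le (fun i ↦ mul_nonneg (hq i) (integral_nonneg (hψ₀ i))) hle
      (hq₁.summable.mul_right B)
  rw [← integral_tsum_of_summable_integral_norm (fun i ↦ (hψ i).const_mul (q i))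
    (by simpa only [hnorm] using hsum)]
  calc ∑' i, ∫ x, q i * ψ i x ∂μ = ∑' i, q i * ∫ x, ψ i x ∂μ := by simp only [integral_const_mul]
    _ ≤ ∑' i, q i * B := hsum.tsum_le_tsum hle (hq₁.summable.mul_right B)
    _ = B := by rw [tsum_mul_right, hq₁.tsum_eq, one_mul]

variable {E : Type*} [NormedAddCommGroup E] [NormedSpace ℝ E] [MeasurableSpace E]
  {μ : Measure E} {Ω : Set E}

lemma IsC1TestFun.integral_mul_le_setIntegral {χ f : E → ℝ} (hχ : IsC1TestFun Ω χ)
    (hχ₁ : ∀ x, χ x ∈ Set.Icc 0 1) (hf : LocallyIntegrable f μ) (hf₀ : ∀ x, 0 ≤ f x) :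
    ∫ x, χ x * f x ∂μ ≤ ∫ x in tsupport χ, f x ∂μ := by
  rw [← setIntegral_eq_integral_of_forall_compl_eq_zero (s := tsupport χ) fun x hx ↦ by
    rw [image_eq_zero_of_notMem_tsupport hx, zero_mul]]
  refine integral_mono_of_nonneg (ae_of_all _ fun x ↦ mul_nonneg (hχ₁ x).1 (hf₀ x))
    (hf.integrableOn_isCompact hχ.hasCompactSupport) (ae_of_all _ fun x ↦ ?_)
  exact mul_le_of_le_one_left (hf₀ x) (hχ₁ x).2

theorem exists_continuous_forall_integral_mul_le [FiniteDimensional ℝ E] [BorelSpace E]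
    (hΩ : IsOpen Ω) {ι : Type*} {f : ι → E → ℝ} (hf : ∀ i, LocallyIntegrable (f i) μ)
    (hf₀ : ∀ i x, 0 ≤ f i x) {B : ι → ℝ}
    (hB : ∀ K, IsCompact K → K ⊆ Ω → ∃ ε > 0, ∀ i, ε * ∫ x in K, f i x ∂μ ≤ B i) :
    ∃ W : E → ℝ, Continuous W ∧ (∀ x ∈ Ω, 0 < W x) ∧ ∀ i, ∫ x, W x * f i x ∂μ ≤ B i := by
  obtain ⟨K, hK, hKΩ⟩ : IsSigmaCompact Ω := by
    have : LocallyCompactSpace Ω := hΩ.locallyCompactSpace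
    exact isSigmaCompact_iff_sigmaCompactSpace.2 inferInstance
  choose χ hχ hχ₁ hχK using fun n ↦
    IsC1TestFun.exists_eventuallyEq_one hΩ (hK n) (hKΩ ▸ Set.subset_iUnion K n)
  choose ε hε hεB using fun n ↦ hB _ (hχ n).hasCompactSupport (hχ n).tsupport_subset
  set q : ℕ → ℝ := fun n ↦ (1 / 2) ^ n / 2
  have hq (n) : 0 < q n := by positivity
  have hq₁ : HasSum q 1 := div_self (two_ne_zero' ℝ) ▸ hasSum_geometric_two.div_const 2
  set φ : ℕ → E → ℝ := fun n x ↦ min (ε n) 1 * χ n x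
  have hmin (n) : 0 < min (ε n) 1 := lt_min (hε n) one_pos
  have hφ (n x) : 0 ≤ φ n x := mul_nonneg (hmin n).le (hχ₁ n x).1
  have hφ₁ (n x) : q n * φ n x ≤ q n :=
    mul_le_of_le_one_right (hq n).le (mul_le_one₀ (min_le_right _ _) (hχ₁ n x).1 (hχ₁ n x).2)
  refine ⟨fun x ↦ ∑' n, q n * φ n x, ?_, fun x hx ↦ ?_, fun i ↦ ?_⟩
  · refine continuous_tsum (fun n ↦ ((hχ n).continuous.const_mul _).const_mul _) hq₁.summable
      fun n x ↦ ?_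
    rw [Real.norm_of_nonneg (mul_nonneg (hq n).le (hφ n x))]
    exact hφ₁ n x
  · obtain ⟨n, hn⟩ := Set.mem_iUnion.1 (hKΩ.symm ▸ hx)
    have hnonneg (k) : 0 ≤ q k * φ k x := mul_nonneg (hq k).le (hφ k x)
    refine (hq₁.summable.of_nonneg_of_le hnonneg (hφ₁ · x)).tsum_pos hnonneg n ?_
    simpa only [φ, (hχK n x hn).eq_of_nhds, mul_one] using mul_pos (hq n) (hmin n)
  · have hφf (n) : Integrable (fun x ↦ φ n x * f i x) μ :=
      (hf i).integrable_smul_left_of_hasCompactSupport ((hχ n).continuous.const_mul _)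
        (hχ n).hasCompactSupport.mul_left
    simp only [← tsum_mul_right, mul_assoc (q _)]
    refine integral_tsum_mul_le (fun n ↦ (hq n).le) hq₁ hφf
      (fun n x ↦ mul_nonneg (hφ n x) (hf₀ i x)) fun n ↦ ?_
    simp only [φ, mul_assoc, integral_const_mul]
    have hχf : 0 ≤ ∫ x, χ n x * f i x ∂μ :=
      integral_nonneg fun x ↦ mul_nonneg (hχ₁ n x).1 (hf₀ i x)
    exact (mul_le_mul (min_le_left _ _) ((hχ n).integral_mul_le_setIntegral (hχ₁ n) (hf i) (hf₀ i))
      hχf (hε n).le).trans (hεB n i)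

end Weights

section Criterion

variable {d : ℕ} {Ω K B : Set (Euc d)} {V V₀ h m v : Euc d → ℝ} {p D η t : ℝ}
  {c : (Euc d → ℝ) → ℝ}

lemma LocBddPotential.of_bounded (h : Measurable V) (hb : ∃ C, ∀ x, |V x| ≤ C) :
    LocBddPotential Ω V :=
  ⟨h, fun _ _ _ ↦ hb.imp fun _ hC x _ ↦ hC x⟩

lemma IsC1TestFun.energyQ_add_mul {w : Euc d → ℝ} (hw : IsC1TestFun Ω w) (hp : 0 < p)
    (hV : LocBddPotential Ω V) (hV₀ : LocBddPotential Ω V₀) (t : ℝ) :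
    energyQ Ω (fun x ↦ V x + t * V₀ x) p w =
      energyQ Ω V p w + t * ∫ x in Ω, V₀ x * |w x| ^ p := by
  have hwV := hw.integrable_potential_mul_rpow hp hV
  have hwV₀ := hw.integrable_potential_mul_rpow hp hV₀
  have hQ : IntegrableOn (fun x ↦ ‖gradient w x‖ ^ p + V x * |w x| ^ p) Ω :=
    ((hw.integrable_norm_gradient_rpow hp).add hwV).integrableOn
  rw [energyQ, energyQ, ← integral_const_mul, ← integral_add hQ (hwV₀.const_mul t).integrableOn]
  congr 1 with x
  ring

lemma setIntegral_mul_eq_closure_support (hΩ : IsOpen Ω)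
    (hV₀Ω : closure (Function.support V₀) ⊆ Ω) (f : Euc d → ℝ) :
    ∫ x in Ω, V₀ x * f x = ∫ x in closure (Function.support V₀), V₀ x * f x :=
  setIntegral_eq_of_subset_of_forall_sdiff_eq_zero hΩ.measurableSet hV₀Ω fun x hx ↦ by
    rw [Function.notMem_support.1 fun h ↦ hx.2 (subset_closure h), zero_mul]

lemma IsControlled.exists_abs_setIntegral_mul_rpow_sub_le (hp : 1 < p) (hK : IsCompact K)
    (hKc : IsControlled Ω V p v c K) (hm : AEStronglyMeasurable m (volume.restrict K))
    (hmD : ∀ x ∈ K, |m x| ≤ D) (hη : 0 < η) :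
    ∃ C ≥ 0, ∀ r, IsC1TestFun Ω r →
      |(∫ x in K, m x * |r x| ^ p) - |c r| ^ p * ∫ x in K, m x| ≤
        η * |c r| ^ p + C * energyQ Ω V p (fun x ↦ r x * v x) := by
  set κ := volume.real K
  obtain ⟨ε, hε, hεη⟩ := exists_pos_mul_lt (half_pos hη) (|D| * κ)
  obtain ⟨C, hC, hpow⟩ := exists_abs_norm_rpow_sub_le (H := ℝ) hp hε
  obtain ⟨δ, hδ, hδη⟩ := exists_pos_mul_lt (half_pos hη) (|D| * C)
  obtain ⟨C', hC', hcontrol⟩ := hKc.2 δ hδ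
  refine ⟨|D| * C * C', by positivity, fun r hr ↦ ?_⟩
  have hcompare := abs_setIntegral_mul_norm_rpow_sub_le (μ := volume) (by linarith) hK hm
    (fun x hx ↦ (hmD x hx).trans (le_abs_self D)) hr.continuous.continuousOn
    (continuousOn_const (c := c r)) hpow
  simp only [Real.norm_eq_abs, integral_mul_const, setIntegral_const, smul_eq_mul] at hcompare
  rw [mul_comm (|c r| ^ p)]
  calc |(∫ x in K, m x * |r x| ^ p) - (∫ x in K, m x) * |c r| ^ p|
      ≤ |D| * (ε * (κ * |c r| ^ p) + C * ∫ x in K, |r x - c r| ^ p) := hcompare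
    _ ≤ |D| * (ε * (κ * |c r| ^ p) +
          C * (δ * |c r| ^ p + C' * energyQ Ω V p (fun x ↦ r x * v x))) := by
        gcongr
        exact hcontrol r hr
    _ = (|D| * κ * ε) * |c r| ^ p + (|D| * C * δ) * |c r| ^ p +
          |D| * C * C' * energyQ Ω V p (fun x ↦ r x * v x) := by ring
    _ ≤ η / 2 * |c r| ^ p + η / 2 * |c r| ^ p +
          |D| * C * C' * energyQ Ω V p (fun x ↦ r x * v x) := by gcongr
    _ = _ := by ring

/-- `c` is an *amplitude* for `v` if `|w| ^ p`, integrated against any bounded weight on a compact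
subset of `Ω`, differs from the integral of `|c w * v| ^ p` by at most a multiple of `Q_V(w)`, up to
an arbitrarily small multiple of `|c w| ^ p`. -/
def IsAmplitude (Ω : Set (Euc d)) (V : Euc d → ℝ) (p : ℝ) (v : Euc d → ℝ)
    (c : (Euc d → ℝ) → ℝ) : Prop :=
  ∀ K, IsCompact K → K ⊆ Ω → ∀ h, Measurable h → ∀ D, (∀ x ∈ K, |h x| ≤ D) → ∀ η > 0,
    ∃ C ≥ 0, ∀ w, IsC1TestFun Ω w →
      |(∫ x in K, h x * |w x| ^ p) - |c w| ^ p * ∫ x in K, h x * v x ^ p| ≤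
        η * |c w| ^ p + C * energyQ Ω V p w

theorem IsPositiveCriticalPoint.exists_isAmplitude (hv : IsPositiveCriticalPoint Ω V p v)
    (hΩ : IsOpen Ω) (hΩc : IsConnected Ω) (hp : 1 < p) (hV : LocBddPotential Ω V) :
    ∃ c, IsAmplitude Ω V p v c := by
  obtain ⟨c, hc⟩ := hv.exists_forall_isControlled hΩ hΩc hp hV
  refine ⟨fun w ↦ c fun x ↦ w x * (v x)⁻¹, fun K hK hKΩ h hh D hhD η hη ↦ ?_⟩
  have hvp : ContinuousOn (fun x ↦ v x ^ p) K :=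
    (hv.contDiffOn.continuousOn.mono hKΩ).rpow_const fun x hx ↦ Or.inl (hv.pos x (hKΩ hx)).ne'
  obtain ⟨M, hM⟩ := hK.exists_bound_of_continuousOn hvp
  obtain ⟨C, hC, hweight⟩ := (hc K hK hKΩ).exists_abs_setIntegral_mul_rpow_sub_le hp hK
    (m := fun x ↦ h x * v x ^ p) (D := D * M)
    (hh.aestronglyMeasurable.mul (hvp.aestronglyMeasurable hK.measurableSet))
    (fun x hx ↦ by
      rw [abs_mul]
      exact mul_le_mul (hhD x hx) (hM x hx) (abs_nonneg _) ((abs_nonneg _).trans (hhD x hx))) hη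
  refine ⟨C, hC, fun w hw ↦ ?_⟩
  have hr : IsC1TestFun Ω fun x ↦ w x * (v x)⁻¹ := hw.mul_contDiffOn hΩ
    (hv.contDiffOn.inv fun x hx ↦ (hv.pos x hx).ne')
  have hrv : (fun x ↦ w x * (v x)⁻¹ * v x) = w := by
    ext x
    by_cases hx : x ∈ tsupport w
    · exact inv_mul_cancel_right₀ (hv.pos x (hw.tsupport_subset hx)).ne' _
    · rw [image_eq_zero_of_notMem_tsupport hx, zero_mul, zero_mul]
  have hpow : ∫ x in K, h x * |w x| ^ p = ∫ x in K, h x * v x ^ p * |w x * (v x)⁻¹| ^ p := by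
    refine setIntegral_congr_fun hK.measurableSet fun x hx ↦ ?_
    have hvx := hv.pos x (hKΩ hx)
    simp only [mul_assoc (h x), abs_mul, abs_inv, abs_of_pos hvx]
    rw [← Real.mul_rpow hvx.le (by positivity), mul_left_comm, mul_inv_cancel₀ hvx.ne', mul_one]
  simpa only [hrv, hpow] using hweight _ hr

namespace IsAmplitude

lemma exists_mul_setIntegral_rpow_le (hc : IsAmplitude Ω V p v c)
    (hQ : ∀ w, IsC1TestFun Ω w → 0 ≤ energyQ Ω V p w) (hK : IsCompact K) (hKΩ : K ⊆ Ω) :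
    ∃ ε > 0, ∀ w, IsC1TestFun Ω w →
      ε * ∫ x in K, |w x| ^ p ≤ energyQ Ω V p w + |c w| ^ p := by
  obtain ⟨C, hC, hone⟩ := hc K hK hKΩ (fun _ ↦ 1) measurable_const 1 (by simp) 1 one_pos
  simp only [one_mul] at hone
  set J := ∫ x in K, v x ^ p
  refine ⟨(|J| + 1 + C)⁻¹, by positivity, fun w hw ↦ (inv_mul_le_iff₀ (by positivity)).2 ?_⟩
  have hupper := le_of_abs_le (hone w hw)
  have hQw := hQ w hw
  have hcw : 0 ≤ |c w| ^ p := by positivity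
  calc ∫ x in K, |w x| ^ p ≤ |c w| ^ p * |J| + |c w| ^ p + C * energyQ Ω V p w := by
        linarith [mul_le_mul_of_nonneg_left (le_abs_self J) hcw]
    _ ≤ |c w| ^ p * |J| + |c w| ^ p + C * energyQ Ω V p w +
          (C * |c w| ^ p + (|J| + 1) * energyQ Ω V p w) := le_add_of_nonneg_right (by positivity)
    _ = (|J| + 1 + C) * (energyQ Ω V p w + |c w| ^ p) := by ring

lemma exists_mul_le_energyQ_add (hc : IsAmplitude Ω V p v c)
    (hQ : ∀ w, IsC1TestFun Ω w → 0 ≤ energyQ Ω V p w) (hK : IsCompact K) (hKΩ : K ⊆ Ω)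
    (hh : Measurable h) (hhD : ∀ x ∈ K, |h x| ≤ D) (hpos : 0 < ∫ x in K, h x * v x ^ p) :
    ∃ t > 0, ∃ κ > 0, ∀ w, IsC1TestFun Ω w →
      κ * (energyQ Ω V p w + |c w| ^ p) ≤ energyQ Ω V p w + t * ∫ x in K, h x * |w x| ^ p := by
  set I := ∫ x in K, h x * v x ^ p
  obtain ⟨C, -, hh⟩ := hc K hK hKΩ h hh D hhD (I / 2) (half_pos hpos)
  obtain ⟨t, ht, hCt⟩ := exists_pos_mul_lt one_half_pos C
  refine ⟨t, ht, min (1 / 2) (t * (I / 2)), by positivity, fun w hw ↦ ?_⟩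
  have hQw := hQ w hw
  have hlower : I / 2 * |c w| ^ p - C * energyQ Ω V p w ≤ ∫ x in K, h x * |w x| ^ p := by
    linarith [neg_le_of_abs_le (hh w hw)]
  calc min (1 / 2) (t * (I / 2)) * (energyQ Ω V p w + |c w| ^ p)
      ≤ 1 / 2 * energyQ Ω V p w + t * (I / 2) * |c w| ^ p := by
        rw [mul_add]
        gcongr
        exacts [min_le_left _ _, min_le_right _ _]
    _ ≤ (1 - C * t) * energyQ Ω V p w + t * (I / 2) * |c w| ^ p := by gcongr; linarith
    _ = energyQ Ω V p w + t * (I / 2 * |c w| ^ p - C * energyQ Ω V p w) := by ring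
    _ ≤ _ := by gcongr

end IsAmplitude

lemma HasSpectralGap.of_forall_isCompact (hΩ : IsOpen Ω) (hp : 0 < p)
    (h : ∀ K, IsCompact K → K ⊆ Ω →
      ∃ ε > 0, ∀ w, IsTestFun Ω w → ε * ∫ x in K, |w x| ^ p ≤ energyQ Ω V p w) :
    HasSpectralGap Ω V p := by
  obtain ⟨W, hW, hW₀, hWle⟩ := exists_continuous_forall_integral_mul_le (μ := volume) hΩ
    (ι := {w // IsTestFun Ω w}) (f := fun w x ↦ |w.1 x| ^ p) (B := fun w ↦ energyQ Ω V p w.1)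
    (fun w ↦ (w.2.1.continuous.abs.rpow_const fun _ ↦ Or.inr hp.le).locallyIntegrable)
    (fun w x ↦ by positivity) fun K hK hKΩ ↦
      (h K hK hKΩ).imp fun ε hε ↦ ⟨hε.1, fun w ↦ hε.2 w.1 w.2⟩
  refine ⟨W, hW.continuousOn, hW₀, fun w hw ↦ ?_⟩
  rw [setIntegral_eq_integral_of_forall_compl_eq_zero fun x hx ↦ ?_]
  · exact hWle ⟨w, hw⟩
  · rw [image_eq_zero_of_notMem_tsupport fun hxw ↦ hx (hw.2.2 hxw), abs_zero,
      Real.zero_rpow hp.ne', mul_zero]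

lemma HasSpectralGap.exists_mul_setIntegral_rpow_le (hgap : HasSpectralGap Ω V p) (hΩ : IsOpen Ω)
    (hp : 0 < p) (hK : IsCompact K) (hKΩ : K ⊆ Ω) :
    ∃ ε > 0, ∀ w, IsTestFun Ω w → ε * ∫ x in K, |w x| ^ p ≤ energyQ Ω V p w := by
  obtain ⟨W, hW, hW₀, hWle⟩ := hgap
  obtain ⟨ε, hε, hεW⟩ := hK.exists_forall_le' (hW.mono hKΩ) fun x hx ↦ hW₀ x (hKΩ hx)
  refine ⟨ε, hε, fun w hw ↦ le_trans ?_ (hWle w hw)⟩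
  have hwp : Continuous fun x ↦ |w x| ^ p :=
    hw.1.continuous.abs.rpow_const fun _ ↦ Or.inr hp.le
  have hWw : Integrable fun x ↦ W x * |w x| ^ p := by
    rw [← integrableOn_iff_integrable_of_support_subset (s := tsupport w)]
    · exact ((hW.mono hw.2.2).mul hwp.continuousOn).integrableOn_compact hw.2.1
    · refine Function.support_subset_iff'.2 fun x hx ↦ ?_
      rw [image_eq_zero_of_notMem_tsupport hx, abs_zero, Real.zero_rpow hp.ne', mul_zero]
  calc ε * ∫ x in K, |w x| ^ p = ∫ x in K, ε * |w x| ^ p := (integral_const_mul _ _).symm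
    _ ≤ ∫ x in K, W x * |w x| ^ p :=
        setIntegral_mono_on ((hwp.continuousOn.integrableOn_compact hK).const_mul ε)
          hWw.integrableOn hK.measurableSet fun x hx ↦ by gcongr; exact hεW x hx
    _ ≤ ∫ x in Ω, W x * |w x| ^ p := by
        refine setIntegral_mono_set hWw.integrableOn ?_ hKΩ.eventuallyLE
        filter_upwards [ae_restrict_mem hΩ.measurableSet] with x hx
        exact mul_nonneg (hW₀ x hx).le (by positivity)

theorem IsGroundState.setIntegral_pos_of_hasSpectralGap (hv : IsGroundState Ω V p v)
    (hΩ : IsOpen Ω) (hp : 1 < p) (hV : LocBddPotential Ω V) (hV₀ : LocBddPotential Ω V₀)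
    (hV₀c : IsCompact (closure (Function.support V₀)))
    (hV₀Ω : closure (Function.support V₀) ⊆ Ω) (ht : 0 < t)
    (hgap : HasSpectralGap Ω (fun x ↦ V x + t * V₀ x) p) : 0 < ∫ x in Ω, V₀ x * v x ^ p := by
  have hp0 : 0 < p := by linarith
  obtain ⟨hv₁, hvpos, u, ⟨hu, hu₀, B, -, hB, hBΩ, huB, hQu⟩, hlim⟩ := hv
  obtain ⟨ε, hε, hgap⟩ := hgap.exists_mul_setIntegral_rpow_le hΩ hp0 hB hBΩ
  have hmass (k) : 1 ≤ ∫ x in closure B, |u k x| ^ p := by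
    rw [← huB k]
    simp only [fun x ↦ abs_of_nonneg (hu₀ k x)]
    refine setIntegral_mono_set ?_ (ae_of_all _ fun x ↦ ?_) subset_closure.eventuallyLE
    · exact ((hu k).1.continuous.rpow_const fun _ ↦ Or.inr hp0.le).continuousOn.integrableOn_compact
        hB
    · exact Real.rpow_nonneg (hu₀ k x) p
  obtain ⟨D, hD⟩ := hV₀.2 _ hV₀Ω hV₀c
  have hV₀u : Tendsto (fun k ↦ ∫ x in Ω, V₀ x * |u k x| ^ p) atTop
      (𝓝 (∫ x in Ω, V₀ x * |v x| ^ p)) := by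
    simp only [setIntegral_mul_eq_closure_support hΩ hV₀Ω]
    exact tendsto_setIntegral_mul_norm_rpow hp hV₀c hV₀.1.aestronglyMeasurable hD
      (fun k ↦ (hu k).1.continuous.continuousOn) (hv₁.continuousOn.mono hV₀Ω) (hlim _ hV₀Ω hV₀c)
  have hle : ε ≤ 0 + t * ∫ x in Ω, V₀ x * |v x| ^ p :=
    ge_of_tendsto' (hQu.add (hV₀u.const_mul t)) fun k ↦ by
      rw [← (hu k).isC1TestFun.energyQ_add_mul hp0 hV hV₀ t]
      exact (le_mul_of_one_le_right hε.le (hmass k)).trans (hgap _ (hu k))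
  rw [zero_add] at hle
  rw [setIntegral_congr_fun hΩ.measurableSet (g := fun x ↦ V₀ x * |v x| ^ p) fun x hx ↦ by
    simp only [abs_of_pos (hvpos x hx)]]
  exact pos_of_mul_pos_right (hε.trans_le hle) ht.le

theorem IsPositiveCriticalPoint.exists_hasSpectralGap (hv : IsPositiveCriticalPoint Ω V p v)
    (hΩ : IsOpen Ω) (hΩc : IsConnected Ω) (hp : 1 < p) (hV : LocBddPotential Ω V)
    (hQ : ∀ w, IsC1TestFun Ω w → 0 ≤ energyQ Ω V p w) (hV₀ : LocBddPotential Ω V₀)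
    (hV₀c : IsCompact (closure (Function.support V₀)))
    (hV₀Ω : closure (Function.support V₀) ⊆ Ω) (hpos : 0 < ∫ x in Ω, V₀ x * v x ^ p) :
    ∃ t, 0 < t ∧ HasSpectralGap Ω (fun x ↦ V x + t * V₀ x) p := by
  have hp0 : 0 < p := by linarith
  obtain ⟨c, hc⟩ := hv.exists_isAmplitude hΩ hΩc hp hV
  obtain ⟨D, hD⟩ := hV₀.2 _ hV₀Ω hV₀c
  rw [setIntegral_mul_eq_closure_support hΩ hV₀Ω] at hpos
  obtain ⟨t, ht, κ, hκ, hcoercive⟩ := hc.exists_mul_le_energyQ_add hQ hV₀c hV₀Ω hV₀.1 hD hpos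
  refine ⟨t, ht, .of_forall_isCompact hΩ hp0 fun K hK hKΩ ↦ ?_⟩
  obtain ⟨ε, hε, hmass⟩ := hc.exists_mul_setIntegral_rpow_le hQ hK hKΩ
  refine ⟨κ * ε, by positivity, fun w hw ↦ ?_⟩
  rw [hw.isC1TestFun.energyQ_add_mul hp0 hV hV₀, setIntegral_mul_eq_closure_support hΩ hV₀Ω,
    mul_assoc]
  exact (mul_le_mul_of_nonneg_left (hmass w hw.isC1TestFun) hκ.le).trans
    (hcoercive w hw.isC1TestFun)

end Criterion

theorem perturbation_criterion_general {d : ℕ} (Ω : Set (Euc d)) (hΩo : IsOpen Ω)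
    (hΩc : IsConnected Ω) {p : ℝ} (hp₁ : 1 < p) (V : Euc d → ℝ) (hV : LocBddPotential Ω V)
    (hQ : ∀ u : Euc d → ℝ, IsTestFun Ω u → 0 ≤ energyQ Ω V p u)
    (v : Euc d → ℝ) (hv : IsGroundState Ω V p v)
    (V₀ : Euc d → ℝ) (hV₀m : Measurable V₀) (hV₀b : ∃ C : ℝ, ∀ x, |V₀ x| ≤ C)
    (hV₀sc : IsCompact (closure (Function.support V₀)))
    (hV₀sΩ : closure (Function.support V₀) ⊆ Ω) :
    (∃ t : ℝ, 0 < t ∧ HasSpectralGap Ω (fun x => V x + t * V₀ x) p) ↔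
      0 < ∫ x in Ω, V₀ x * v x ^ p := by
  have hV₀ : LocBddPotential Ω V₀ := .of_bounded hV₀m hV₀b
  have hQ₁ (w : Euc d → ℝ) (hw : IsC1TestFun Ω w) : 0 ≤ energyQ Ω V p w :=
    hw.energyQ_nonneg hΩo hV hp₁ hQ
  refine ⟨fun ⟨t, ht, hgap⟩ ↦ ?_, fun hpos ↦ ?_⟩
  · exact hv.setIntegral_pos_of_hasSpectralGap hΩo hp₁ hV hV₀ hV₀sc hV₀sΩ ht hgap
  · exact (hv.isPositiveCriticalPoint hΩo hp₁ hV hQ₁).exists_hasSpectralGap hΩo hΩc hp₁ hV hQ₁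
      hV₀ hV₀sc hV₀sΩ hpos

/-- **Perturbation criterion for a degenerately positive functional.** If `Q_V ≥ 0`
admits a ground state `v` and `V₀` is a bounded measurable function whose support has
compact closure contained in `Ω`, then `Q_{V + t V₀}` is strictly positive in `Ω` for
some `t > 0` if and only if `∫_Ω V₀ v^p > 0`. -/
theorem perturbation_criterion {d : ℕ} (hd : 2 ≤ d)
    (Ω : Set (Euc d)) (hΩo : IsOpen Ω) (hΩc : IsConnected Ω)
    {p : ℝ} (hp₁ : 1 < p) (V : Euc d → ℝ) (hV : LocBddPotential Ω V)
    (hQ : ∀ u : Euc d → ℝ, IsTestFun Ω u → 0 ≤ energyQ Ω V p u)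
    (v : Euc d → ℝ) (hv : IsGroundState Ω V p v)
    (V₀ : Euc d → ℝ) (hV₀m : Measurable V₀) (hV₀b : ∃ C : ℝ, ∀ x, |V₀ x| ≤ C)
    (hV₀sc : IsCompact (closure (Function.support V₀)))
    (hV₀sΩ : closure (Function.support V₀) ⊆ Ω) :
    (∃ t : ℝ, 0 < t ∧ HasSpectralGap Ω (fun x => V x + t * V₀ x) p) ↔
      0 < ∫ x in Ω, V₀ x * v x ^ p :=
  perturbation_criterion_general Ω hΩo hΩc hp₁ V hV hQ v hv V₀ hV₀m hV₀b hV₀sc hV₀sΩ
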